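/- arXiv:1509.04326 — 2 statements merged into one kernel-verified Lean document; each statement's English description precedes it below -/
import Mathlib

section
/- For every integer s ≥ 1 and every integer l ≥ ⌊s/2⌋ + 1, the truncated power function φ_l is strictly positive definite and radial on ℝ^s: for every finite family of pairwise distinct points x₁, …, x_N in s-dimensional Euclidean space and every vector of real coefficients c₁, …, c_N that is not identically zero, the quadratic form ∑_{i=1}^N ∑_{j=1}^N c_i·c_j·(max(1 − ‖x_i − x_j‖, 0))^l is strictly positive. -/
/-!
The quadratic form of a kernel `∫ |B(p, t/2) ∩ B(q, t/2)| dμ(t)` is the squared `L²` norm of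
`∑ i, c i • 1_{B(x i, t/2)}(z)` in `(t, z)`, hence positive, because indicators of finitely many
distinct balls of equal radius are linearly independent. So it suffices to write `(1 - ‖p - q‖)₊ˡ`
as such a mixture of ball overlaps. With `l = m + 1`, the space embeds isometrically into one of
dimension `2m + 1`. There, slicing along the axis through `p` and `q` shows that the overlap is
proportional to `∫_{x > ‖p - q‖} (t² - x²)₊ᵐ dx`, while `(1 - r)₊ᵐ⁺¹ / (m + 1)` equals
`∫_{x > r} (1 - x)₊ᵐ dx`. Hence it is enough that `(1 - x)₊ᵐ` is a mixture of the kernels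
`(t² - x²)₊ᵐ` over `t`. This follows by applying `-(1 / x) d/dx` repeatedly, which maps
`(1 - x)ᵃ x⁻ᵇ` to a nonnegative combination of functions of the same kind.
-/

open MeasureTheory Metric Module Set
open scoped ENNReal

/-- The radial function `φ(‖·‖)` is strictly positive definite on `E`. Pairwise distinct nodes are
encoded as an injective family. -/
def IsRadialStrictPosDef (E : Type*) [SeminormedAddCommGroup E] (φ : ℝ → ℝ) : Prop :=
  ∀ ⦃N : ℕ⦄ (x : Fin N → E), Function.Injective x → ∀ c : Fin N → ℝ, c ≠ 0 →
    0 < ∑ i, ∑ j, c i * c j * φ ‖x i - x j‖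

lemma IsRadialStrictPosDef.of_linearIsometry {E F : Type*} [NormedAddCommGroup E]
    [NormedSpace ℝ E] [SeminormedAddCommGroup F] [NormedSpace ℝ F] {φ : ℝ → ℝ}
    (hφ : IsRadialStrictPosDef F φ) (L : E →ₗᵢ[ℝ] F) : IsRadialStrictPosDef E φ := by
  intro N x hx c hc
  simpa only [Function.comp_apply, ← map_sub, L.norm_map] using
    hφ (L ∘ x) (L.injective.comp hx) c hc

lemma nonempty_linearIsometry_of_finrank_le {𝕜 E F : Type*} [RCLike 𝕜]
    [NormedAddCommGroup E] [InnerProductSpace 𝕜 E] [FiniteDimensional 𝕜 E]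
    [NormedAddCommGroup F] [InnerProductSpace 𝕜 F] [FiniteDimensional 𝕜 F]
    (h : finrank 𝕜 E ≤ finrank 𝕜 F) : Nonempty (E →ₗᵢ[𝕜] F) := by
  let b := stdOrthonormalBasis 𝕜 E
  let v := stdOrthonormalBasis 𝕜 F ∘ Fin.castLE h
  have hv : Orthonormal 𝕜 v :=
    (stdOrthonormalBasis 𝕜 F).orthonormal.comp _ (Fin.castLE_injective h)
  have hb : b.toBasis.constr 𝕜 v ∘ b.toBasis = v := funext fun i ↦ b.toBasis.constr_basis 𝕜 v i
  exact ⟨(b.toBasis.constr 𝕜 v).isometryOfOrthonormal (v := b.toBasis)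
    (by simp [b.orthonormal]) (hb.symm ▸ hv)⟩

lemma sum_mul_measureReal_inter_pos {α ι : Type*} [MeasurableSpace α] {μ : Measure α} [Fintype ι]
    {S : ι → Set α} (hS : ∀ i, MeasurableSet (S i)) (hμS : ∀ i, μ (S i) ≠ ∞) {c : ι → ℝ}
    (hc : ¬ ∀ᵐ w ∂μ, ∑ i, c i * (S i).indicator (fun _ ↦ (1 : ℝ)) w = 0) :
    0 < ∑ i, ∑ j, c i * c j * μ.real (S i ∩ S j) := by
  let v i : Lp ℝ 2 μ := indicatorConstLp 2 (hS i) (hμS i) 1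
  have hgram : ∑ i, ∑ j, c i * c j * μ.real (S i ∩ S j) =
      inner ℝ (∑ i, c i • v i) (∑ j, c j • v j) := by
    rw [sum_inner]
    simp only [inner_sum, real_inner_smul_left, real_inner_smul_right, v,
      L2.real_inner_indicatorConstLp_one_indicatorConstLp_one, mul_assoc, mul_left_comm]
  rw [hgram, real_inner_self_pos]
  intro hzero
  apply hc
  have hcoe : ∀ᵐ w ∂μ, ∀ i, (c i • v i) w = c i * (S i).indicator (fun _ ↦ (1 : ℝ)) w :=
    ae_all_iff.2 fun i ↦ by
      filter_upwards [Lp.coeFn_smul (c i) (v i),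
        indicatorConstLp_coeFn (p := 2) (hs := hS i) (hμs := hμS i) (c := (1 : ℝ))] with w h₁ h₂
      rw [h₁, Pi.smul_apply, h₂, smul_eq_mul]
  filter_upwards [hcoe, Lp.coeFn_fun_finsetSum Finset.univ (fun i ↦ c i • v i),
    Lp.coeFn_zero ℝ 2 μ] with w hw hsum h0
  rw [← Finset.sum_congr rfl fun i _ ↦ hw i, ← hsum, hzero, h0, Pi.zero_apply]

section Balls

variable {E : Type*} [NormedAddCommGroup E] [InnerProductSpace ℝ E] [Nontrivial E]

lemma exists_isOpen_subset_ball_disjoint {ι : Type*} {s : Finset ι} (hs : s.Nonempty) {x : ι → E}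
    (hx : Function.Injective x) {ρ : ℝ} (hρ : 0 < ρ) :
    ∃ i ∈ s, ∃ U ⊆ ball (x i) ρ, IsOpen U ∧ U.Nonempty ∧
      ∀ j ∈ s, j ≠ i → Disjoint U (ball (x j) ρ) := by
  obtain ⟨v, hv⟩ := exists_norm_eq E zero_le_one
  obtain ⟨i, hi, hmax⟩ := s.exists_max_image (fun i ↦ inner ℝ v (x i)) hs
  -- `x i` is extremal in direction `v`, so no other ball reaches its tip `x i + ρ • v`.
  have hfar : ∀ j ∈ s, j ≠ i → ρ < dist (x i + ρ • v) (x j) := fun j hj hji ↦ by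
    have hsub : 0 < ‖x i - x j‖ := norm_sub_pos_iff.2 fun h ↦ hji (hx h).symm
    have hinner : 0 ≤ inner ℝ (x i - x j) v := by
      rw [real_inner_comm, inner_sub_right, sub_nonneg]
      exact hmax j hj
    refine lt_of_pow_lt_pow_left₀ 2 dist_nonneg ?_
    rw [dist_eq_norm, add_sub_right_comm, norm_add_sq_real, real_inner_smul_right, norm_smul, hv,
      mul_one, Real.norm_eq_abs, sq_abs]
    linarith [pow_pos hsub 2, mul_nonneg hρ.le hinner]
  classical
  let W : Set E := ⋂ j ∈ s.erase i, (closedBall (x j) ρ)ᶜ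
  have hW : IsOpen W := isOpen_biInter_finset fun j _ ↦ isClosed_closedBall.isOpen_compl
  have hmem : x i + ρ • v ∈ closure (ball (x i) ρ) := by
    simp [closure_ball _ hρ.ne', norm_smul, hv, abs_of_pos hρ]
  have hmemW : x i + ρ • v ∈ W := mem_iInter₂.2 fun j hj ↦ by
    simpa using hfar j (Finset.mem_of_mem_erase hj) (Finset.ne_of_mem_erase hj)
  refine ⟨i, hi, W ∩ ball (x i) ρ, inter_subset_right, hW.inter isOpen_ball,
    mem_closure_iff.1 hmem W hW hmemW, fun j hj hji ↦ ?_⟩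
  refine disjoint_compl_left.mono (inter_subset_left.trans ?_) ball_subset_closedBall
  exact biInter_subset_of_mem (t := fun j ↦ (closedBall (x j) ρ)ᶜ) (by simp [hj, hji])

lemma eq_zero_of_ae_sum_indicator_ball_eq_zero [MeasurableSpace E] {μ : Measure E}
    [μ.IsOpenPosMeasure] {ι : Type*} [Fintype ι] {x : ι → E} (hx : Function.Injective x) {ρ : ℝ}
    (hρ : 0 < ρ) {c : ι → ℝ}
    (h : ∀ᵐ z ∂μ, ∑ i, c i * (ball (x i) ρ).indicator (fun _ ↦ (1 : ℝ)) z = 0) : c = 0 := by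
  classical
  by_contra! hc
  obtain ⟨i₀, hi₀⟩ := Function.ne_iff.1 hc
  obtain ⟨i, hi, U, hUi, hUo, hUne, hUj⟩ := exists_isOpen_subset_ball_disjoint
    (s := {i | c i ≠ 0}) ⟨i₀, by simpa using hi₀⟩ hx hρ
  obtain ⟨z, hzU, hz⟩ : ∃ z ∈ U, ∑ i, c i * (ball (x i) ρ).indicator (fun _ ↦ (1 : ℝ)) z = 0 := by
    by_contra! hU
    exact (hUo.measure_pos μ hUne).ne' (measure_mono_null hU (ae_iff.1 h))
  rw [Fintype.sum_eq_single i fun j hji ↦ ?_, indicator_of_mem (hUi hzU), mul_one] at hz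
  · exact (Finset.mem_filter.1 hi).2 hz
  · by_cases hj : c j = 0
    · rw [hj, zero_mul]
    · rw [indicator_of_notMem ((hUj j (by simpa using hj) hji).notMem_of_mem_left hzU), mul_zero]

theorem isRadialStrictPosDef_of_lintegral_ball_inter_ball [FiniteDimensional ℝ E]
    [MeasurableSpace E] [BorelSpace E] {μ : Measure ℝ} [SFinite μ] {φ : ℝ → ℝ}
    (hφ : ∀ r, 0 ≤ φ r) (hφ0 : 0 < φ 0)
    (h : ∀ p q : E, ∫⁻ t, volume (ball p (t / 2) ∩ ball q (t / 2)) ∂μ = .ofReal (φ ‖p - q‖)) :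
    IsRadialStrictPosDef E φ := by
  intro N x hx c hc
  let S (p : E) : Set (ℝ × E) := {w | w.2 ∈ ball p (w.1 / 2)}
  have hS p : MeasurableSet (S p) := measurableSet_lt (measurable_snd.dist measurable_const)
    (measurable_fst.div_const 2)
  have hvol p q : (μ.prod volume) (S p ∩ S q) = .ofReal (φ ‖p - q‖) := by
    rw [← h, Measure.prod_apply ((hS p).inter (hS q))]
    rfl
  have hfin p : (μ.prod volume) (S p) ≠ ∞ := by
    rw [← inter_self (S p), hvol]
    exact ENNReal.ofReal_ne_top
  have hμ : ∃ᵐ t ∂μ, 0 < t := fun hnonpos ↦ by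
    have hnull : ∫⁻ t, volume (ball (0 : E) (t / 2) ∩ ball 0 (t / 2)) ∂μ = 0 := by
      refine (lintegral_congr_ae (hnonpos.mono fun t ht ↦ ?_)).trans lintegral_zero
      simp [ball_eq_empty.2 (by linarith [not_lt.1 ht] : t / 2 ≤ 0)]
    rw [h, sub_self, norm_zero, ENNReal.ofReal_eq_zero] at hnull
    exact hφ0.not_ge hnull
  have hpos := sum_mul_measureReal_inter_pos (fun i ↦ hS (x i)) (fun i ↦ hfin (x i)) (c := c)
    fun hae ↦ hc ?_
  · simpa only [measureReal_def, hvol, ENNReal.toReal_ofReal (hφ _)] using hpos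
  · obtain ⟨t, ht, hzero⟩ := (hμ.and_eventually (Measure.ae_ae_of_ae_prod hae)).exists
    exact eq_zero_of_ae_sum_indicator_ball_eq_zero hx (half_pos ht) hzero

end Balls

section Lens

variable {E F : Type*} [NormedAddCommGroup E] [InnerProductSpace ℝ E] [FiniteDimensional ℝ E]
  [MeasurableSpace E] [BorelSpace E] [NormedAddCommGroup F] [InnerProductSpace ℝ F]
  [FiniteDimensional ℝ F] [MeasurableSpace F] [BorelSpace F]

lemma volume_ball_inter_ball_eq_of_norm_sub_eq {p q p' q' : E} (h : ‖q - p‖ = ‖q' - p'‖) (ρ : ℝ) :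
    volume (ball p ρ ∩ ball q ρ) = volume (ball p' ρ ∩ ball q' ρ) := by
  have htranslate (p q : E) :
      volume (ball p ρ ∩ ball q ρ) = volume (ball 0 ρ ∩ ball (q - p) ρ) := by
    rw [← measure_preimage_add volume p, preimage_inter, preimage_add_ball, preimage_add_ball,
      sub_self]
  let L := (ℝ ∙ (q - p - (q' - p')))ᗮ.reflection
  have hL : L.symm (q - p) = q' - p' := Submodule.reflection_sub h
  rw [htranslate p q, htranslate p' q', ← L.measurePreserving.measure_preimage
    (measurableSet_ball.inter measurableSet_ball).nullMeasurableSet, preimage_inter,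
    L.preimage_ball, L.preimage_ball, map_zero, hL]

lemma sq_sub_lt_and_sq_add_lt_iff {a h R : ℝ} (hh : 0 ≤ h) :
    (a - h) ^ 2 < R ∧ (a + h) ^ 2 < R ↔ (|a| + h) ^ 2 < R := by
  rcases abs_cases a with ⟨ha, _⟩ | ⟨ha, _⟩ <;> rw [ha] <;>
    exact ⟨fun ⟨_, _⟩ ↦ by nlinarith, fun _ ↦ ⟨by nlinarith, by nlinarith⟩⟩

lemma volume_ball_toLp_inter_ball_toLp_neg {h ρ : ℝ} (hh : 0 ≤ h) (hρ : 0 < ρ) :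
    volume (ball (WithLp.toLp 2 (h, (0 : F))) ρ ∩ ball (WithLp.toLp 2 (-h, (0 : F))) ρ) =
      ∫⁻ a : ℝ, volume (ball (0 : F) √(ρ ^ 2 - (|a| + h) ^ 2)) := by
  have hmeas : MeasurableSet
      (ball (WithLp.toLp 2 (h, (0 : F))) ρ ∩ ball (WithLp.toLp 2 (-h, (0 : F))) ρ) :=
    measurableSet_ball.inter measurableSet_ball
  rw [← (WithLp.volume_preserving_toLp ℝ F).measure_preimage hmeas.nullMeasurableSet,
    Measure.volume_eq_prod,
    Measure.prod_apply ((WithLp.volume_preserving_toLp ℝ F).measurable hmeas)]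
  refine lintegral_congr fun a ↦ congrArg volume (Set.ext fun y ↦ ?_)
  simp only [mem_preimage, mem_inter_iff, mem_ball, WithLp.prod_dist_eq_of_L2, Real.sqrt_lt' hρ,
    dist_zero_right, Real.lt_sqrt (norm_nonneg y), Real.dist_eq, sq_abs, WithLp.toLp_fst,
    WithLp.toLp_snd, sub_neg_eq_add, ← lt_sub_iff_add_lt, sq_sub_lt_and_sq_add_lt_iff hh]
  exact lt_sub_comm

lemma lintegral_comp_two_mul_abs_add (f : ℝ → ℝ≥0∞) (r : ℝ) :
    ∫⁻ a, f (2 * |a| + r) = ∫⁻ x in Ioi r, f x := by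
  have himage : (fun a ↦ 2 * a + r) '' Ioi 0 = Ioi r := by
    rw [← image_image (· + r) (2 * ·), image_mul_left_Ioi two_pos, mul_zero, image_add_const_Ioi,
      zero_add]
  have hright : ∫⁻ x in Ioi r, f x = 2 * ∫⁻ a in Ioi 0, f (2 * |a| + r) := by
    have hderiv (a : ℝ) : HasDerivAt (fun a ↦ 2 * a + r) 2 a := by
      simpa using ((hasDerivAt_id a).const_mul 2).add_const r
    have hinj : Function.Injective fun a : ℝ ↦ 2 * a + r :=
      (add_left_injective r).comp (mul_right_injective₀ two_ne_zero)
    rw [← himage, lintegral_image_eq_lintegral_abs_deriv_mul measurableSet_Ioi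
      (fun a _ ↦ (hderiv a).hasDerivWithinAt) hinj.injOn, abs_two,
      lintegral_const_mul' _ _ ENNReal.ofReal_ne_top, ENNReal.ofReal_ofNat]
    congr 1
    exact setLIntegral_congr_fun measurableSet_Ioi fun a ha ↦ by rw [abs_of_pos ha]
  have hleft : ∫⁻ a in Iic 0, f (2 * |a| + r) = ∫⁻ a in Ioi 0, f (2 * |a| + r) := by
    rw [setLIntegral_congr Iio_ae_eq_Iic.symm,
      ← (Measure.measurePreserving_neg (volume : Measure ℝ)).setLIntegral_comp_preimage_emb
        (MeasurableEquiv.neg ℝ).measurableEmbedding]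
    simp
  rw [← lintegral_add_compl _ measurableSet_Ioi (A := Ioi 0), compl_Ioi, hleft, hright, two_mul]

theorem volume_ball_inter_ball_withLp_prod (p q : WithLp 2 (ℝ × F)) {t : ℝ} (ht : 0 < t) :
    volume (ball p (t / 2) ∩ ball q (t / 2)) =
      ∫⁻ x in Ioi ‖p - q‖, volume (ball (0 : F) (√(t ^ 2 - x ^ 2) * (1 / 2))) := by
  obtain ⟨d, hd⟩ : ∃ d, ‖p - q‖ = d := ⟨_, rfl⟩
  have hd0 : 0 ≤ d := hd ▸ norm_nonneg _
  have hnorm : ‖q - p‖ = ‖WithLp.toLp 2 (-(d / 2), (0 : F)) - WithLp.toLp 2 (d / 2, (0 : F))‖ := by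
    rw [norm_sub_rev, hd, ← WithLp.toLp_sub, WithLp.prod_norm_eq_of_L2]
    simp [Real.sqrt_sq_eq_abs, abs_of_nonneg hd0, abs_sub_comm]
  rw [volume_ball_inter_ball_eq_of_norm_sub_eq hnorm,
    volume_ball_toLp_inter_ball_toLp_neg (by positivity) (half_pos ht), hd,
    ← lintegral_comp_two_mul_abs_add]
  refine lintegral_congr fun a ↦ ?_
  have hscale : (t / 2) ^ 2 - (|a| + d / 2) ^ 2 = (t ^ 2 - (2 * |a| + d) ^ 2) * (1 / 2) ^ 2 := by
    ring
  rw [hscale, Real.sqrt_mul' _ (by positivity), Real.sqrt_sq (by norm_num)]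

end Lens

lemma indicator_Iio_add_lintegral_Ioi_of_hasDerivAt {f g : ℝ → ℝ} {r T : ℝ}
    (hcont : ContinuousOn f (Icc r T)) (hderiv : ∀ x ∈ Ioo r T, HasDerivAt f (-g x) x)
    (hg : ∀ x ∈ Ioo r T, 0 ≤ g x) (hfT : 0 ≤ f T) :
    (Iio T).indicator (fun _ ↦ .ofReal (f T)) r +
      ∫⁻ x in Ioi r, (Iio T).indicator (fun x ↦ .ofReal (g x)) x =
      (Iio T).indicator (fun x ↦ .ofReal (f x)) r := by
  rw [lintegral_indicator measurableSet_Iio, Measure.restrict_restrict measurableSet_Iio,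
    Iio_inter_Ioi]
  rcases le_or_gt T r with hTr | hrT
  · simp [hTr.not_gt]
  have hderiv' : ∀ x ∈ Ioo r T, HasDerivAt (-f) (g x) x := fun x hx ↦ by
    simpa using (hderiv x hx).neg
  have hint : IntegrableOn g (Ioc r T) :=
    intervalIntegral.integrableOn_deriv_of_nonneg hcont.neg hderiv' hg
  have hftc : ∫ x in Ioo r T, g x = f r - f T := by
    rw [← integral_Ioc_eq_integral_Ioo, ← intervalIntegral.integral_of_le hrT.le,
      intervalIntegral.integral_eq_sub_of_hasDerivAt_of_le hrT.le hcont.neg hderiv'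
        ((intervalIntegrable_iff_integrableOn_Ioc_of_le hrT.le).2 hint),
      Pi.neg_apply, Pi.neg_apply, neg_sub_neg]
  have hnonneg : 0 ≤ᵐ[volume.restrict (Ioo r T)] g :=
    (ae_restrict_iff' measurableSet_Ioo).2 (.of_forall hg)
  rw [← ofReal_integral_eq_lintegral_ofReal (hint.mono_set Ioo_subset_Ioc_self) hnonneg,
    indicator_of_mem (mem_Iio.2 hrT), indicator_of_mem (mem_Iio.2 hrT),
    ← ENNReal.ofReal_add hfT (integral_nonneg_of_ae hnonneg), hftc, add_sub_cancel]

/-- The kernel `(t² - x²)₊ᵏ`, meant for `x ≥ 0` and vanishing for `x ≥ t` also when `k = 0`. -/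
noncomputable def quadKernel (k : ℕ) (t : ℝ) : ℝ → ℝ≥0∞ :=
  (Iio t).indicator fun x ↦ .ofReal ((t ^ 2 - x ^ 2) ^ k)

lemma measurable_uncurry_quadKernel (k : ℕ) : Measurable (Function.uncurry (quadKernel k)) := by
  unfold Function.uncurry quadKernel
  simp only [indicator_apply, mem_Iio]
  exact Measurable.ite (measurableSet_lt measurable_snd measurable_fst) (by fun_prop)
    measurable_const

lemma lintegral_Ioi_mul_quadKernel (k : ℕ) (t : ℝ) {r : ℝ} (hr : 0 ≤ r) :
    ∫⁻ x in Ioi r, .ofReal x * quadKernel k t x =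
      .ofReal (1 / (2 * (k + 1))) * quadKernel (k + 1) t r := by
  have hderiv (x : ℝ) : HasDerivAt (fun x ↦ 1 / (2 * (k + 1)) * (t ^ 2 - x ^ 2) ^ (k + 1))
      (-(x * (t ^ 2 - x ^ 2) ^ k)) x := by
    refine ((((hasDerivAt_pow 2 x).const_sub (t ^ 2)).fun_pow (k + 1)).const_mul
      (1 / (2 * (k + 1) : ℝ))).congr_deriv ?_
    simp only [Nat.add_sub_cancel, Nat.cast_add, Nat.cast_one, Nat.cast_ofNat]
    field_simp
    ring
  have hnonneg : ∀ x ∈ Ioo r t, 0 ≤ x * (t ^ 2 - x ^ 2) ^ k := fun x hx ↦ by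
    have hx0 : 0 ≤ x := hr.trans hx.1.le
    exact mul_nonneg hx0 (pow_nonneg (sub_nonneg.2 (pow_le_pow_left₀ hx0 hx.2.le 2)) k)
  have hftc := indicator_Iio_add_lintegral_Ioi_of_hasDerivAt (T := t)
    (fun x _ ↦ (hderiv x).continuousAt.continuousWithinAt) (fun x _ ↦ hderiv x) hnonneg (by simp)
  simp only [sub_self, zero_pow k.succ_ne_zero, mul_zero, ENNReal.ofReal_zero, indicator_zero,
    zero_add] at hftc
  calc
    _ = ∫⁻ x in Ioi r, (Iio t).indicator (fun x ↦ .ofReal (x * (t ^ 2 - x ^ 2) ^ k)) x :=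
      setLIntegral_congr_fun measurableSet_Ioi fun x hx ↦ by
        simp only [quadKernel, indicator_apply, mul_ite, mul_zero,
          ENNReal.ofReal_mul (hr.trans (mem_Ioi.1 hx).le)]
    _ = _ := by
      have hk : (0 : ℝ) ≤ 1 / (2 * (k + 1)) := by positivity
      rw [hftc]
      simp only [quadKernel, indicator_apply, mul_ite, mul_zero, ENNReal.ofReal_mul hk]

/-- `f` is, on `(0, ∞)`, a mixture over `t` of the kernels `(t² - x²)₊ᵏ`. This is the analogue for
the operator `-(1 / x) d/dx` of Williamson's representation of multiply monotone functions. -/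
def IsQuadKernelMixture (k : ℕ) (f : ℝ → ℝ≥0∞) : Prop :=
  ∃ μ : Measure ℝ, SFinite μ ∧ ∀ r, 0 < r → f r = ∫⁻ t, quadKernel k t r ∂μ

namespace IsQuadKernelMixture

variable {k : ℕ} {f g : ℝ → ℝ≥0∞}

lemma congr (hf : IsQuadKernelMixture k f) (h : ∀ r, 0 < r → f r = g r) :
    IsQuadKernelMixture k g := by
  obtain ⟨μ, hμ, hf⟩ := hf
  exact ⟨μ, hμ, fun r hr ↦ (h r hr).symm.trans (hf r hr)⟩

lemma add (hf : IsQuadKernelMixture k f) (hg : IsQuadKernelMixture k g) :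
    IsQuadKernelMixture k (f + g) := by
  obtain ⟨μ, _, hf⟩ := hf
  obtain ⟨ν, _, hg⟩ := hg
  exact ⟨μ + ν, inferInstance, fun r hr ↦ by
    rw [lintegral_add_measure, Pi.add_apply, hf r hr, hg r hr]⟩

lemma const_smul (c : ℝ≥0∞) (hf : IsQuadKernelMixture k f) : IsQuadKernelMixture k (c • f) := by
  obtain ⟨μ, _, hf⟩ := hf
  exact ⟨c • μ, inferInstance, fun r hr ↦ by rw [lintegral_smul_measure, Pi.smul_apply, hf r hr]⟩

lemma of_measure_Ioi (μ : Measure ℝ) [SFinite μ] : IsQuadKernelMixture 0 fun r ↦ μ (Ioi r) := by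
  refine ⟨μ, inferInstance, fun r _ ↦ (lintegral_indicator_one measurableSet_Ioi).symm.trans ?_⟩
  exact lintegral_congr fun t ↦ by simp [quadKernel, indicator_apply]

lemma lintegral_Ioi_mul (hf : IsQuadKernelMixture k f) :
    IsQuadKernelMixture (k + 1) fun r ↦ ∫⁻ x in Ioi r, .ofReal x * f x := by
  obtain ⟨μ, _, hf⟩ := hf
  suffices h : ∀ r, 0 < r → ∫⁻ x in Ioi r, .ofReal x * f x =
      .ofReal (1 / (2 * (k + 1))) * ∫⁻ t, quadKernel (k + 1) t r ∂μ from
    (const_smul _ ⟨μ, inferInstance, fun r _ ↦ rfl⟩).congr fun r hr ↦ (h r hr).symm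
  intro r hr
  calc
    _ = ∫⁻ x in Ioi r, ∫⁻ t, .ofReal x * quadKernel k t x ∂μ :=
      setLIntegral_congr_fun measurableSet_Ioi fun x hx ↦ by
        rw [hf x (hr.trans hx), lintegral_const_mul' _ _ ENNReal.ofReal_ne_top]
    _ = ∫⁻ t, (∫⁻ x in Ioi r, .ofReal x * quadKernel k t x) ∂μ :=
      lintegral_lintegral_swap ((measurable_fst.ennreal_ofReal.mul
        ((measurable_uncurry_quadKernel k).comp measurable_swap)).aemeasurable)
    _ = _ := by
      simp only [lintegral_Ioi_mul_quadKernel k _ hr.le,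
        lintegral_const_mul' _ _ ENNReal.ofReal_ne_top]

end IsQuadKernelMixture

/-- The truncated profile `(1 - x)₊ᵃ x⁻ᵇ`, meant for `x > 0` and vanishing for `x ≥ 1` also when
`a = 0`. -/
noncomputable def truncPowDivPow (a b : ℕ) : ℝ → ℝ≥0∞ :=
  (Iio 1).indicator fun x ↦ .ofReal ((1 - x) ^ a * x⁻¹ ^ b)

lemma ofReal_mul_truncPowDivPow_succ (a b : ℕ) {x : ℝ} (hx : 0 < x) :
    .ofReal x * truncPowDivPow a (b + 1) x = truncPowDivPow a b x := by
  have hcancel : x * ((1 - x) ^ a * x⁻¹ ^ (b + 1)) = (1 - x) ^ a * x⁻¹ ^ b := by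
    rw [pow_succ]
    field_simp
  simp only [truncPowDivPow, indicator_apply, mul_ite, mul_zero, ← ENNReal.ofReal_mul hx.le,
    hcancel]

lemma indicator_add_lintegral_Ioi_truncPowDivPow (a b : ℕ) {r : ℝ} (hr : 0 < r) :
    (Iio 1).indicator (fun _ ↦ .ofReal (0 ^ a)) r +
      ∫⁻ x in Ioi r, (a * truncPowDivPow (a - 1) b x + b * truncPowDivPow a (b + 1) x) =
      truncPowDivPow a b r := by
  have hderiv (x : ℝ) (hx : 0 < x) : HasDerivAt (fun x ↦ (1 - x) ^ a * x⁻¹ ^ b)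
      (-(a * ((1 - x) ^ (a - 1) * x⁻¹ ^ b) + b * ((1 - x) ^ a * x⁻¹ ^ (b + 1)))) x := by
    refine ((((hasDerivAt_id' x).const_sub 1).fun_pow a).fun_mul
      ((hasDerivAt_inv hx.ne').fun_pow b)).congr_deriv ?_
    rcases b with _ | b
    · simp
    · simp only [Nat.cast_add, Nat.cast_one, Nat.add_sub_cancel]
      ring
  have hnonneg : ∀ x ∈ Ioo r 1, 0 ≤ a * ((1 - x) ^ (a - 1) * x⁻¹ ^ b) ∧
      0 ≤ b * ((1 - x) ^ a * x⁻¹ ^ (b + 1)) := fun x hx ↦ by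
    have hx0 : 0 < x := hr.trans hx.1
    have hx1 : 0 < 1 - x := sub_pos.2 hx.2
    constructor <;> positivity
  have hftc := indicator_Iio_add_lintegral_Ioi_of_hasDerivAt (T := 1)
    (fun x hx ↦ (hderiv x (hr.trans_le hx.1)).continuousAt.continuousWithinAt)
    (fun x hx ↦ hderiv x (hr.trans hx.1)) (fun x hx ↦ add_nonneg (hnonneg x hx).1 (hnonneg x hx).2)
    (by simp)
  simp only [sub_self, inv_one, one_pow, mul_one] at hftc
  rw [truncPowDivPow.eq_def a b, ← hftc]
  congr 1
  refine setLIntegral_congr_fun measurableSet_Ioi fun x hx ↦ ?_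
  rcases lt_or_ge x 1 with hx1 | hx1
  · obtain ⟨h₁, h₂⟩ := hnonneg x ⟨hx, hx1⟩
    simp only [truncPowDivPow, indicator_of_mem (mem_Iio.2 hx1), ENNReal.ofReal_add h₁ h₂,
      ENNReal.ofReal_mul (Nat.cast_nonneg _), ENNReal.ofReal_natCast]
  · simp [truncPowDivPow, hx1.not_gt]

lemma isQuadKernelMixture_truncPowDivPow {k a : ℕ} (hka : k ≤ a) (b : ℕ) :
    IsQuadKernelMixture k (truncPowDivPow a b) := by
  induction k generalizing a b with
  | zero =>
    let g (x : ℝ) : ℝ≥0∞ := a * truncPowDivPow (a - 1) b x + b * truncPowDivPow a (b + 1) x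
    refine (IsQuadKernelMixture.of_measure_Ioi
      (ENNReal.ofReal (0 ^ a) • .dirac 1 + volume.withDensity g)).congr fun r hr ↦ ?_
    rw [← indicator_add_lintegral_Ioi_truncPowDivPow a b hr, Measure.add_apply,
      withDensity_apply _ measurableSet_Ioi, Measure.smul_apply,
      Measure.dirac_apply' _ measurableSet_Ioi]
    simp [g, indicator_apply]
  | succ k ih =>
    have hmix := ((ih (Nat.le_sub_one_of_lt hka) (b + 1)).const_smul a).add
      ((ih (Nat.le_of_succ_le hka) (b + 2)).const_smul b)
    refine hmix.lintegral_Ioi_mul.congr fun r hr ↦ ?_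
    rw [← indicator_add_lintegral_Ioi_truncPowDivPow a b hr, zero_pow (by lia), ENNReal.ofReal_zero,
      indicator_zero, zero_add]
    refine setLIntegral_congr_fun measurableSet_Ioi fun x hx ↦ ?_
    simp only [Pi.add_apply, Pi.smul_apply, smul_eq_mul, mul_add, mul_left_comm (ENNReal.ofReal x),
      ofReal_mul_truncPowDivPow_succ _ _ (hr.trans hx)]

lemma lintegral_Ioi_truncPowDivPow_zero (m : ℕ) (r : ℝ) :
    ∫⁻ x in Ioi r, truncPowDivPow m 0 x = .ofReal (max (1 - r) 0 ^ (m + 1) / (m + 1)) := by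
  have hderiv (x : ℝ) : HasDerivAt (fun x : ℝ ↦ (1 - x) ^ (m + 1) / (m + 1)) (-(1 - x) ^ m) x := by
    refine ((((hasDerivAt_id' x).const_sub 1).fun_pow (m + 1)).div_const _).congr_deriv ?_
    simp only [Nat.cast_add, Nat.cast_one, Nat.add_sub_cancel]
    field_simp
  have hftc := indicator_Iio_add_lintegral_Ioi_of_hasDerivAt (T := 1) (r := r)
    (fun x _ ↦ (hderiv x).continuousAt.continuousWithinAt) (fun x _ ↦ hderiv x)
    (fun x hx ↦ pow_nonneg (sub_nonneg.2 hx.2.le) m) (by simp)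
  simp only [truncPowDivPow, pow_zero, mul_one]
  rcases lt_or_ge r 1 with h | h
  · simpa [h, h.le] using hftc
  · simpa [h, h.not_gt] using hftc

section Overlap

variable {F : Type*} [NormedAddCommGroup F] [InnerProductSpace ℝ F] [FiniteDimensional ℝ F]
  [MeasurableSpace F] [BorelSpace F] {m : ℕ}

lemma volume_ball_sqrt_mul (hF : finrank ℝ F = 2 * m) {t x : ℝ} (hx : 0 ≤ x) (ht : 0 ≤ t) (ρ : ℝ) :
    volume (ball (0 : F) (√(t ^ 2 - x ^ 2) * ρ)) = volume (ball (0 : F) ρ) * quadKernel m t x := by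
  rcases lt_or_ge x t with hxt | hxt
  · have hsub : 0 < t ^ 2 - x ^ 2 := sub_pos.2 (pow_lt_pow_left₀ hxt hx two_ne_zero)
    rw [Measure.addHaar_ball_mul_of_pos _ _ (Real.sqrt_pos.2 hsub), hF, pow_mul,
      Real.sq_sqrt hsub.le, quadKernel, indicator_of_mem (mem_Iio.2 hxt), mul_comm]
  · have hsub : t ^ 2 - x ^ 2 ≤ 0 := sub_nonpos.2 (pow_le_pow_left₀ ht hxt 2)
    simp [quadKernel, hxt.not_gt, Real.sqrt_eq_zero_of_nonpos hsub]

theorem volume_ball_inter_ball_eq_lintegral_quadKernel (hF : finrank ℝ F = 2 * m)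
    (p q : WithLp 2 (ℝ × F)) (t : ℝ) :
    volume (ball p (t / 2) ∩ ball q (t / 2)) =
      volume (ball (0 : F) (1 / 2)) * ∫⁻ x in Ioi ‖p - q‖, quadKernel m t x := by
  rw [← lintegral_const_mul' _ _ measure_ball_lt_top.ne]
  rcases lt_or_ge 0 t with ht | ht
  · rw [volume_ball_inter_ball_withLp_prod p q ht]
    exact setLIntegral_congr_fun measurableSet_Ioi fun x hx ↦
      volume_ball_sqrt_mul hF ((norm_nonneg _).trans (mem_Ioi.1 hx).le) ht.le _
  · rw [ball_eq_empty.2 (by linarith), empty_inter, measure_empty, eq_comm,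
      setLIntegral_congr_fun (g := 0) measurableSet_Ioi fun x hx ↦ ?_, Pi.zero_def, lintegral_zero]
    have hxt : ¬ x < t := by linarith [norm_nonneg (p - q), mem_Ioi.1 hx]
    simp [quadKernel, hxt]

theorem exists_lintegral_ball_inter_ball_eq_truncated_power (hF : finrank ℝ F = 2 * m) :
    ∃ μ : Measure ℝ, SFinite μ ∧ ∀ p q : WithLp 2 (ℝ × F),
      ∫⁻ t, volume (ball p (t / 2) ∩ ball q (t / 2)) ∂μ =
        .ofReal (max (1 - ‖p - q‖) 0 ^ (m + 1)) := by
  obtain ⟨μ, _, hμ⟩ := isQuadKernelMixture_truncPowDivPow (le_refl m) 0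
  let C := volume (ball (0 : F) (1 / 2))
  have hC : C ≠ 0 := (measure_ball_pos _ _ one_half_pos).ne'
  have hC' : C ≠ ∞ := measure_ball_lt_top.ne
  refine ⟨(.ofReal (m + 1) * C⁻¹) • μ, inferInstance, fun p q ↦ ?_⟩
  have hswap : ∫⁻ t, (∫⁻ x in Ioi ‖p - q‖, quadKernel m t x) ∂μ =
      ∫⁻ x in Ioi ‖p - q‖, truncPowDivPow m 0 x := by
    rw [lintegral_lintegral_swap (measurable_uncurry_quadKernel m).aemeasurable]
    exact setLIntegral_congr_fun measurableSet_Ioi fun x hx ↦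
      (hμ x ((norm_nonneg _).trans_lt hx)).symm
  simp only [volume_ball_inter_ball_eq_lintegral_quadKernel hF, lintegral_smul_measure, smul_eq_mul]
  rw [lintegral_const_mul' _ _ hC', hswap, lintegral_Ioi_truncPowDivPow_zero, mul_assoc,
    ENNReal.inv_mul_cancel_left hC hC', ← ENNReal.ofReal_mul (by positivity),
    mul_div_cancel₀ _ (by positivity)]

end Overlap

theorem truncated_power_strictly_positive_definite_general {E : Type*} [NormedAddCommGroup E]
    [InnerProductSpace ℝ E] [FiniteDimensional ℝ E] {l : ℕ} (hl : finrank ℝ E / 2 + 1 ≤ l) :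
    IsRadialStrictPosDef E fun r ↦ max (1 - r) 0 ^ l := by
  obtain ⟨m, rfl⟩ : ∃ m, l = m + 1 := ⟨l - 1, by lia⟩
  let H := WithLp 2 (ℝ × EuclideanSpace ℝ (Fin (2 * m)))
  have hH : finrank ℝ H = 2 * m + 1 := by
    simp [H, (WithLp.linearEquiv 2 ℝ _).finrank_eq, add_comm]
  obtain ⟨L⟩ := nonempty_linearIsometry_of_finrank_le (𝕜 := ℝ) (E := E) (F := H) (by rw [hH]; lia)
  obtain ⟨μ, _, hμ⟩ := exists_lintegral_ball_inter_ball_eq_truncated_power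
    (F := EuclideanSpace ℝ (Fin (2 * m))) finrank_euclideanSpace_fin
  exact (isRadialStrictPosDef_of_lintegral_ball_inter_ball (fun r ↦ by positivity) (by simp)
    hμ).of_linearIsometry L

/-- For every integer `s ≥ 1` and every integer `l ≥ ⌊s/2⌋ + 1`, the truncated power
function `φ_l r = (max (1-r) 0)^l` is strictly positive definite and radial on `ℝ^s`:
for every finite family of pairwise distinct points `x₁, …, x_N` in `s`-dimensional
Euclidean space and every nonzero vector of coefficients `c₁, …, c_N`,
`∑ i ∑ j, c i * c j * (max (1 - ‖x i - x j‖) 0)^l > 0`. -/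
theorem truncated_power_strictly_positive_definite
    (s : ℕ) (hs : 1 ≤ s) (l : ℕ) (hl : s / 2 + 1 ≤ l)
    (N : ℕ) (x : Fin N → EuclideanSpace ℝ (Fin s)) (hx : Function.Injective x)
    (c : Fin N → ℝ) (hc : c ≠ 0) :
    0 < ∑ i : Fin N, ∑ j : Fin N, c i * c j * (max (1 - ‖x i - x j‖) 0) ^ l :=
  truncated_power_strictly_positive_definite_general (by simpa using hl) x hx c hc
end

section
/- For every integer s ≥ 1 and every integer k ≥ 0, the Wendland function φ_{s,k} = I^k φ_l with l = ⌊s/2⌋ + k + 1 is strictly positive definite and radial on ℝ^s: for every finite family of pairwise distinct points x₁, …, x_N in s-dimensional Euclidean space and every vector of real coefficients c₁, …, c_N that is not identically zero, ∑_{i=1}^N ∑_{j=1}^N c_i·c_j·φ_{s,k}(‖x_i − x_j‖) > 0. -/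
open MeasureTheory

/-- The montée operator: `(I φ) r = ∫ t in (r, ∞), t * φ t`. -/
noncomputable def montee (φ : ℝ → ℝ) (r : ℝ) : ℝ := ∫ t in Set.Ioi r, t * φ t

/-- The Wendland function `φ_{s,k} = I^k φ_{⌊s/2⌋+k+1}`, where
`φ_l r = (max (1-r) 0)^l` is the truncated power function. -/
noncomputable def wendland (s k : ℕ) : ℝ → ℝ :=
  montee^[k] (fun r => (max (1 - r) 0) ^ (s / 2 + k + 1))

/-!
Write `s / 2 = p` and `m = p + k`. There is a decreasing radial profile `W`, supported in
`[0, 1/2]`, whose `m`-fold montée is `(1 - 2 r)₊ ^ m`. Cutting the space along the hyperplane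
equidistant from two points `a` and `b` shows that in dimension `2 m + 1` the integral
`∫ min (W ‖z - a‖) (W ‖z - b‖) dz` is a constant multiple of Askey's function
`(1 - ‖a - b‖)₊ ^ (m + 1)`: integration over the `2 m` directions of the hyperplane is, up to a
constant, the `m`-fold montée. By the layer-cake formula the minimum is the integral over the
level `t` of products of indicators of balls around `a` and `b`.

Split off `2 k` of the `2 m + 1` coordinates and integrate over them the offset `b - a`. On one side
this applies the montée `k` times and produces the Wendland function; on the other side the ball
indicators become the volumes `G t` of ball slices. Hence, up to a positive constant, the quadratic
form is `∫∫ (∑ i, c i * G t (u - x i)) ^ 2 du dt`. It cannot vanish: for a fixed level, `G t` is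
supported on a ball of some radius `R` and positive inside it, and at distance slightly less than
`R` from the `x i` of largest norm with `c i ≠ 0`, radially outwards, there is an open set which
meets no other of these balls. Smaller and even dimensions embed into the odd dimension `2 p + 1`.
-/

open Set Module Real
open scoped ENNReal

/-- The radial kernel `(x, y) ↦ φ ‖x - y‖` is strictly positive definite on `E`. -/
def IsStrictlyPosDefOn (E : Type*) [NormedAddCommGroup E] (φ : ℝ → ℝ) : Prop :=
  ∀ (N : ℕ) (x : Fin N → E), Function.Injective x → ∀ c : Fin N → ℝ, c ≠ 0 →
    0 < ∑ i, ∑ j, c i * c j * φ ‖x i - x j‖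

lemma IsStrictlyPosDefOn.of_isometry {E F : Type*} [NormedAddCommGroup E] [NormedAddCommGroup F]
    {φ : ℝ → ℝ} (h : IsStrictlyPosDefOn F φ) {f : E → F} (hf : Isometry f) :
    IsStrictlyPosDefOn E φ := by
  intro N x hx c hc
  simpa only [Function.comp_apply, ← dist_eq_norm, hf.dist_eq] using
    h N (f ∘ x) (hf.injective.comp hx) c hc

/-- The montée operator on `ℝ≥0∞`-valued functions, which needs no integrability hypotheses. It
agrees with the real one only on `[0, ∞)`, because `ENNReal.ofReal` truncates negative `t`. -/
noncomputable def lmontee (g : ℝ → ℝ≥0∞) (r : ℝ) : ℝ≥0∞ :=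
  ∫⁻ t in Ioi r, ENNReal.ofReal t * g t

lemma lmontee_congr {f g : ℝ → ℝ≥0∞} {r : ℝ} (h : ∀ t, r < t → f t = g t) :
    lmontee f r = lmontee g r :=
  setLIntegral_congr_fun measurableSet_Ioi fun t ht => by rw [h t ht]

lemma antitone_lmontee (g : ℝ → ℝ≥0∞) : Antitone (lmontee g) :=
  fun _ _ h => lintegral_mono_set (Ioi_subset_Ioi h)

lemma measurable_iterate_lmontee {g : ℝ → ℝ≥0∞} (hg : Measurable g) :
    ∀ j : ℕ, Measurable (lmontee^[j] g)
  | 0 => hg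
  | j + 1 => by
    rw [Function.iterate_succ_apply']
    exact (antitone_lmontee _).measurable

lemma lmontee_linear_comb {f g : ℝ → ℝ≥0∞} (hf : Measurable f) (hg : Measurable g)
    (a b : ℝ≥0∞) (r : ℝ) :
    lmontee (fun t => a * f t + b * g t) r = a * lmontee f r + b * lmontee g r := by
  simp only [lmontee, mul_add, mul_left_comm (ENNReal.ofReal _)]
  rw [lintegral_add_left (by fun_prop), lintegral_const_mul _ (by fun_prop),
    lintegral_const_mul _ (by fun_prop)]

lemma iterate_lmontee_linear_comb {f g : ℝ → ℝ≥0∞} (hf : Measurable f) (hg : Measurable g)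
    (a b : ℝ≥0∞) (j : ℕ) :
    lmontee^[j] (fun t => a * f t + b * g t) =
      fun r => a * lmontee^[j] f r + b * lmontee^[j] g r := by
  induction j with
  | zero => rfl
  | succ j ih =>
    funext r
    simp only [Function.iterate_succ_apply', ih]
    exact lmontee_linear_comb (measurable_iterate_lmontee hf j) (measurable_iterate_lmontee hg j)
      a b r

section MonteeComparison

variable {g : ℝ → ℝ≥0∞}

lemma lmontee_le_indicator_one (hg : ∀ r, 0 ≤ r → g r ≤ (Iio 1).indicator 1 r)
    {r : ℝ} (hr : 0 ≤ r) : lmontee g r ≤ (Iio 1).indicator 1 r := by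
  have integrand_le (t : ℝ) (ht : t ∈ Ioi r) :
      ENNReal.ofReal t * g t ≤ (Iio 1).indicator 1 t := by
    have ht0 : 0 ≤ t := hr.trans (le_of_lt ht)
    by_cases ht1 : t ∈ Iio 1
    · simpa [ht1] using
        mul_le_mul' (ENNReal.ofReal_le_one.2 (le_of_lt ht1)) (by simpa [ht1] using hg t ht0)
    · simpa [ht1] using Or.inr (hg t ht0)
  calc lmontee g r ≤ ∫⁻ t in Ioi r, (Iio 1).indicator 1 t :=
        setLIntegral_mono' measurableSet_Ioi integrand_le
    _ = ENNReal.ofReal (1 - r) := by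
        rw [lintegral_indicator_one measurableSet_Iio, Measure.restrict_apply measurableSet_Iio,
          inter_comm, Ioi_inter_Iio, Real.volume_Ioo]
    _ ≤ (Iio 1).indicator 1 r := by
        by_cases hr1 : r < 1
        · simpa [hr1] using hr
        · simpa [hr1] using not_lt.1 hr1

lemma iterate_lmontee_le_indicator_one (hg : ∀ r, 0 ≤ r → g r ≤ (Iio 1).indicator 1 r) (k : ℕ) :
    ∀ r, 0 ≤ r → lmontee^[k] g r ≤ (Iio 1).indicator 1 r := by
  induction k with
  | zero => exact hg
  | succ k ih =>
    intro r hr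
    rw [Function.iterate_succ_apply']
    exact lmontee_le_indicator_one ih hr

lemma montee_eq_toReal_lmontee {φ : ℝ → ℝ} (hgm : Measurable g) {r : ℝ} (hr : 0 ≤ r)
    (hg : ∀ t, r < t → g t ≠ ∞) (hφ : ∀ t, r < t → φ t = (g t).toReal) :
    montee φ r = (lmontee g r).toReal := by
  have integrand_eq : EqOn (fun t => t * φ t) (fun t => (ENNReal.ofReal t * g t).toReal)
      (Ioi r) := fun t ht => by
    simp [hφ t ht, ENNReal.toReal_ofReal (hr.trans (le_of_lt ht))]
  rw [montee, lmontee, setIntegral_congr_fun measurableSet_Ioi integrand_eq]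
  refine integral_toReal (by fun_prop) ?_
  filter_upwards [ae_restrict_mem measurableSet_Ioi] with t ht
  exact ENNReal.mul_lt_top ENNReal.ofReal_lt_top (hg t ht).lt_top

lemma iterate_montee_eq_toReal_iterate_lmontee {φ : ℝ → ℝ} (hgm : Measurable g)
    (hg : ∀ r, 0 ≤ r → g r ≤ (Iio 1).indicator 1 r) (hφ : ∀ r, 0 ≤ r → φ r = (g r).toReal)
    (k : ℕ) : ∀ r, 0 ≤ r → montee^[k] φ r = (lmontee^[k] g r).toReal := by
  induction k with
  | zero => exact hφ
  | succ k ih =>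
    intro r hr
    simp only [Function.iterate_succ_apply']
    refine montee_eq_toReal_lmontee (measurable_iterate_lmontee hgm k) hr (fun t ht => ?_)
      fun t ht => ih t (hr.trans ht.le)
    refine ne_top_of_le_ne_top ?_ (iterate_lmontee_le_indicator_one hg k t (hr.trans ht.le))
    by_cases h : t ∈ Iio 1 <;> simp [h]

end MonteeComparison

/-- The `ℝ≥0∞`-valued Wendland function, which agrees with `wendland s k` on `[0, ∞)`. -/
noncomputable def lwendland (s k : ℕ) : ℝ → ℝ≥0∞ :=
  lmontee^[k] fun r => ENNReal.ofReal (1 - r) ^ (s / 2 + k + 1)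

lemma ofReal_one_sub_pow_le_indicator_one (l : ℕ) {r : ℝ} (hr : 0 ≤ r) :
    ENNReal.ofReal (1 - r) ^ (l + 1) ≤ (Iio 1).indicator 1 r := by
  by_cases h : r ∈ Iio 1
  · simpa [h] using pow_le_one₀ zero_le (ENNReal.ofReal_le_one.2 (by linarith : 1 - r ≤ 1))
  · simpa [h] using not_lt.1 h

lemma lwendland_ne_top (s k : ℕ) {r : ℝ} (hr : 0 ≤ r) : lwendland s k r ≠ ∞ :=
  ne_top_of_le_ne_top (by by_cases h : r ∈ Iio 1 <;> simp [h])
    (iterate_lmontee_le_indicator_one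
      (fun _ ht => ofReal_one_sub_pow_le_indicator_one _ ht) k r hr)

lemma wendland_eq_toReal_lwendland (s k : ℕ) {r : ℝ} (hr : 0 ≤ r) :
    wendland s k r = (lwendland s k r).toReal :=
  iterate_montee_eq_toReal_iterate_lmontee (by fun_prop)
    (fun _ ht => ofReal_one_sub_pow_le_indicator_one _ ht)
    (fun t _ => by simp [ENNReal.toReal_ofReal']) k r hr

lemma ofReal_natCast_add_one (n : ℕ) : ENNReal.ofReal (n + 1) = n + 1 := by
  exact_mod_cast ENNReal.ofReal_natCast (n + 1)

lemma setLIntegral_Ioo_ofReal_of_hasDerivAt {F f : ℝ → ℝ} {a b : ℝ} (hab : a ≤ b)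
    (hF : ContinuousOn F (Icc a b)) (hF' : ∀ t ∈ Ioo a b, HasDerivAt F (f t) t)
    (hf : ∀ t ∈ Ioo a b, 0 ≤ f t) :
    ∫⁻ t in Ioo a b, ENNReal.ofReal (f t) = ENNReal.ofReal (F b - F a) := by
  have hint : IntegrableOn f (Ioc a b) := intervalIntegral.integrableOn_deriv_of_nonneg hF hF' hf
  rw [← ofReal_integral_eq_lintegral_ofReal (hint.mono_set Ioo_subset_Ioc_self)
      ((ae_restrict_iff' measurableSet_Ioo).2 (.of_forall hf)),
    ← integral_Ioc_eq_integral_Ioo, ← intervalIntegral.integral_of_le hab,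
    intervalIntegral.integral_eq_sub_of_hasDerivAt_of_le hab hF hF'
      ((intervalIntegrable_iff_integrableOn_Ioc_of_le hab).2 hint)]

/-- The function `(1 - 2 r)₊ ^ a * r ^ (-b)`, with `(1 - 2 r)₊ ^ 0` the indicator of `r < 1 / 2`.
For `r ≤ 0` the denominator is `0 ^ b`, so the value is `∞` if `0 < b`; this keeps the function
antitone on all of `ℝ`. -/
noncomputable def powerProfile (a b : ℕ) : ℝ → ℝ≥0∞ :=
  (Iio (1 / 2)).indicator fun r => ENNReal.ofReal (1 - 2 * r) ^ a / ENNReal.ofReal r ^ b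

lemma powerProfile_of_lt (a b : ℕ) {r : ℝ} (hr : r < 1 / 2) :
    powerProfile a b r = ENNReal.ofReal (1 - 2 * r) ^ a / ENNReal.ofReal r ^ b :=
  indicator_of_mem (mem_Iio.2 hr) _

lemma powerProfile_eq_zero (a b : ℕ) {r : ℝ} (hr : 1 / 2 ≤ r) : powerProfile a b r = 0 :=
  indicator_of_notMem (notMem_Iio.2 hr) _

lemma antitone_powerProfile (a b : ℕ) : Antitone (powerProfile a b) := by
  intro r t hrt
  rcases lt_or_ge t (1 / 2) with ht | ht
  · rw [powerProfile_of_lt a b ht, powerProfile_of_lt a b (hrt.trans_lt ht)]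
    gcongr
  · rw [powerProfile_eq_zero a b ht]
    exact zero_le

lemma powerProfile_pos (a b : ℕ) {r : ℝ} (hr : r < 1 / 2) : 0 < powerProfile a b r := by
  rw [powerProfile_of_lt a b hr]
  refine ENNReal.div_pos (pow_ne_zero _ ?_) (by finiteness)
  rw [ENNReal.ofReal_ne_zero_iff]
  linarith

lemma powerProfile_eq_ofReal (a b : ℕ) {r : ℝ} (hr : 0 < r) (hr' : r < 1 / 2) :
    powerProfile a b r = ENNReal.ofReal ((1 - 2 * r) ^ a * r ^ (-b : ℤ)) := by
  rw [powerProfile_of_lt a b hr', zpow_neg, zpow_natCast, ← div_eq_mul_inv,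
    ENNReal.ofReal_div_of_pos (by positivity), ENNReal.ofReal_pow (by linarith),
    ENNReal.ofReal_pow hr.le]

lemma setLIntegral_Ioi_eq_Ioo {g : ℝ → ℝ≥0∞} {c : ℝ} (hg : ∀ t, c ≤ t → g t = 0) (r : ℝ) :
    ∫⁻ t in Ioi r, g t = ∫⁻ t in Ioo r c, g t := by
  have indicator_eq : (Iio c).indicator g = g :=
    indicator_eq_self.2 fun t ht => not_le.1 fun h => ht (hg t h)
  rw [← indicator_eq, setLIntegral_indicator measurableSet_Iio, indicator_eq, inter_comm,
    Ioi_inter_Iio]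

lemma hasDerivAt_neg_one_sub_two_mul_pow_mul_zpow (a b : ℕ) {t : ℝ} (ht : 0 < t) :
    HasDerivAt (fun t : ℝ => -((1 - 2 * t) ^ (a + 1) * t ^ (-b : ℤ)))
      (2 * (a + 1) * ((1 - 2 * t) ^ a * t ^ (-b : ℤ)) +
        b * ((1 - 2 * t) ^ (a + 1) * t ^ (-b - 1 : ℤ))) t := by
  convert! (((((hasDerivAt_id t).const_mul 2).const_sub 1).pow (a + 1)).mul
    (hasDerivAt_zpow (-b) t (.inl ht.ne'))).neg using 1
  simp only [id_eq, add_tsub_cancel_right, Nat.cast_add, Nat.cast_one, Int.cast_neg,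
    Int.cast_natCast, Pi.pow_apply]
  ring

lemma lmontee_powerProfile (a b : ℕ) {r : ℝ} (hr : 0 < r) :
    lmontee (fun t => 2 * (a + 1) * powerProfile a (b + 1) t +
      b * powerProfile (a + 1) (b + 2) t) r = powerProfile (a + 1) b r := by
  rw [lmontee, setLIntegral_Ioi_eq_Ioo (c := 1 / 2) fun t ht => by
    simp only [powerProfile_eq_zero _ _ ht, mul_zero, add_zero]]
  rcases le_or_gt (1 / 2) r with hr' | hr'
  · rw [Ioo_eq_empty (not_lt.2 hr'), powerProfile_eq_zero _ _ hr', setLIntegral_empty]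
  have integrand_eq : ∀ t ∈ Ioo r (1 / 2), ENNReal.ofReal t *
      (2 * (a + 1) * powerProfile a (b + 1) t + b * powerProfile (a + 1) (b + 2) t) =
      ENNReal.ofReal (2 * (a + 1) * ((1 - 2 * t) ^ a * t ^ (-b : ℤ)) +
        b * ((1 - 2 * t) ^ (a + 1) * t ^ (-b - 1 : ℤ))) := fun t ⟨hrt, ht⟩ => by
    have ht0 : 0 < t := hr.trans hrt
    have one_sub_nonneg : 0 ≤ 1 - 2 * t := by linarith
    have coeff_eq : (2 * (a + 1) : ℝ≥0∞) = ENNReal.ofReal (2 * (a + 1)) := by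
      rw [ENNReal.ofReal_mul zero_le_two, ofReal_natCast_add_one, ENNReal.ofReal_ofNat]
    rw [powerProfile_eq_ofReal _ _ ht0 ht, powerProfile_eq_ofReal _ _ ht0 ht, coeff_eq,
      ← ENNReal.ofReal_natCast b, ← ENNReal.ofReal_mul (by positivity),
      ← ENNReal.ofReal_mul (by positivity), ← ENNReal.ofReal_add (by positivity) (by positivity),
      ← ENNReal.ofReal_mul ht0.le]
    congr 1
    simp only [Nat.cast_add, Nat.cast_one, Nat.cast_ofNat, neg_add, zpow_add₀ ht0.ne', zpow_neg,
      zpow_one, sub_eq_add_neg]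
    field_simp
  rw [setLIntegral_congr_fun measurableSet_Ioo integrand_eq,
    setLIntegral_Ioo_ofReal_of_hasDerivAt hr'.le
      (fun t ht => (hasDerivAt_neg_one_sub_two_mul_pow_mul_zpow a b
        (hr.trans_le ht.1)).continuousAt.continuousWithinAt)
      (fun t ht => hasDerivAt_neg_one_sub_two_mul_pow_mul_zpow a b (hr.trans ht.1))
      (fun t ht => ?_), powerProfile_eq_ofReal _ _ hr hr']
  · norm_num
  · have ht0 : 0 < t := hr.trans ht.1
    have one_sub_nonneg : 0 ≤ 1 - 2 * t := by linarith [ht.2]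
    positivity

/-- A function whose `j`-fold montée is `powerProfile (j + i) b` on `(0, ∞)`, obtained by
differentiating `j` times with `- d / (r dr)`, the inverse of the montée operator. -/
noncomputable def monteePreimage : ℕ → ℕ → ℕ → ℝ → ℝ≥0∞
  | 0, i, b => powerProfile i b
  | j + 1, i, b => fun r => 2 * ((j + i : ℕ) + 1) * monteePreimage j i (b + 1) r +
      b * monteePreimage j (i + 1) (b + 2) r

lemma antitone_monteePreimage (j i b : ℕ) : Antitone (monteePreimage j i b) := by
  induction j generalizing i b with
  | zero => exact antitone_powerProfile i b
  | succ j ih =>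
    intro r t hrt
    have ih₁ := ih i (b + 1) hrt
    have ih₂ := ih (i + 1) (b + 2) hrt
    simp only [monteePreimage]
    gcongr

lemma monteePreimage_eq_zero (j i b : ℕ) {r : ℝ} (hr : 1 / 2 ≤ r) :
    monteePreimage j i b r = 0 := by
  induction j generalizing i b with
  | zero => exact powerProfile_eq_zero i b hr
  | succ j ih => simp only [monteePreimage, ih, mul_zero, add_zero]

lemma monteePreimage_pos (j i b : ℕ) {r : ℝ} (hr : r < 1 / 2) : 0 < monteePreimage j i b r := by
  induction j generalizing i b with
  | zero => exact powerProfile_pos i b hr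
  | succ j ih =>
    exact (ENNReal.mul_pos (by positivity) (ih i (b + 1)).ne').trans_le le_self_add

lemma iterate_lmontee_monteePreimage (j i b : ℕ) {r : ℝ} (hr : 0 < r) :
    lmontee^[j] (monteePreimage j i b) r = powerProfile (j + i) b r := by
  induction j generalizing i b r with
  | zero => rw [zero_add]; rfl
  | succ j ih =>
    rw [Function.iterate_succ_apply', monteePreimage,
      iterate_lmontee_linear_comb (antitone_monteePreimage j i (b + 1)).measurable
        (antitone_monteePreimage j (i + 1) (b + 2)).measurable,
      lmontee_congr (g := fun t => 2 * ((j + i : ℕ) + 1) * powerProfile (j + i) (b + 1) t +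
        b * powerProfile (j + i + 1) (b + 2) t) fun t ht => by
          rw [ih i (b + 1) (hr.trans ht), ih (i + 1) (b + 2) (hr.trans ht), add_assoc],
      lmontee_powerProfile _ _ hr, add_right_comm]

lemma image_sqrt_sq_add_sq_Ioi {a : ℝ} (ha : 0 ≤ a) :
    (fun ρ : ℝ => √(a ^ 2 + ρ ^ 2)) '' Ioi 0 = Ioi a := by
  ext t
  constructor
  · rintro ⟨ρ, hρ : 0 < ρ, rfl⟩
    exact (Real.lt_sqrt ha).2 (lt_add_of_pos_right _ (by positivity))
  · intro (ht : a < t)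
    have hsq : 0 < t ^ 2 - a ^ 2 := sub_pos.2 (by gcongr)
    refine ⟨√(t ^ 2 - a ^ 2), Real.sqrt_pos.2 hsq, ?_⟩
    simp only [Real.sq_sqrt hsq.le, add_sub_cancel, Real.sqrt_sq (ha.trans ht.le)]

lemma lmontee_eq_setLIntegral_sqrt (g : ℝ → ℝ≥0∞) {a : ℝ} (ha : 0 ≤ a) :
    lmontee g a = ∫⁻ ρ in Ioi 0, ENNReal.ofReal ρ * g √(a ^ 2 + ρ ^ 2) := by
  have sqrt_pos : ∀ ρ ∈ Ioi (0 : ℝ), 0 < √(a ^ 2 + ρ ^ 2) := fun ρ (hρ : 0 < ρ) => by positivity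
  have hasDerivAt_sqrt : ∀ ρ ∈ Ioi (0 : ℝ), HasDerivWithinAt (fun ρ : ℝ => √(a ^ 2 + ρ ^ 2))
      (ρ / √(a ^ 2 + ρ ^ 2)) (Ioi 0) ρ := fun ρ hρ => by
    convert! (((hasDerivAt_pow 2 ρ).const_add (a ^ 2)).sqrt
      (Real.sqrt_pos.1 (sqrt_pos ρ hρ)).ne').hasDerivWithinAt using 1
    rw [pow_one, Nat.cast_ofNat, mul_div_mul_left _ _ two_ne_zero]
  have sqrt_injOn : InjOn (fun ρ : ℝ => √(a ^ 2 + ρ ^ 2)) (Ioi 0) :=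
    fun ρ (hρ : 0 < ρ) σ (hσ : 0 < σ) h => by
      rwa [Real.sqrt_inj (by positivity) (by positivity), add_right_inj,
        sq_eq_sq₀ hρ.le hσ.le] at h
  rw [lmontee, ← image_sqrt_sq_add_sq_Ioi ha, lintegral_image_eq_lintegral_abs_deriv_mul
    measurableSet_Ioi hasDerivAt_sqrt sqrt_injOn]
  refine setLIntegral_congr_fun measurableSet_Ioi fun ρ hρ => ?_
  have hpos := sqrt_pos ρ hρ
  have hρ0 : 0 ≤ ρ := le_of_lt hρ
  rw [← mul_assoc, ← ENNReal.ofReal_mul (abs_nonneg _), abs_of_nonneg (by positivity),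
    div_mul_cancel₀ _ hpos.ne']

lemma lintegral_complex_sqrt_add_norm_sq {g : ℝ → ℝ≥0∞} (hg : Measurable g) {a : ℝ}
    (ha : 0 ≤ a) :
    ∫⁻ z : ℂ, g √(a ^ 2 + ‖z‖ ^ 2) = ENNReal.ofReal (2 * π) * lmontee g a := by
  have polar_integrand (p : ℝ × ℝ) :
      ENNReal.ofReal p.1 • g √(a ^ 2 + ‖Complex.polarCoord.symm p‖ ^ 2) =
        (ENNReal.ofReal p.1 * g √(a ^ 2 + p.1 ^ 2)) * 1 := by
    rw [Complex.norm_polarCoord_symm, sq_abs, smul_eq_mul, mul_one]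
  rw [← Complex.lintegral_comp_polarCoord_symm]
  simp only [polar_integrand]
  rw [polarCoord_target, Measure.volume_eq_prod, ← Measure.prod_restrict,
    lintegral_prod_mul (f := fun ρ => ENNReal.ofReal ρ * g √(a ^ 2 + ρ ^ 2))
      (g := fun _ => 1) (by fun_prop) (by fun_prop),
    ← lmontee_eq_setLIntegral_sqrt g ha, setLIntegral_one, Real.volume_Ioo, sub_neg_eq_add,
    ← two_mul, mul_comm]

section InnerProductSpace

variable {E F : Type*}
  [NormedAddCommGroup E] [InnerProductSpace ℝ E] [FiniteDimensional ℝ E]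
  [MeasurableSpace E] [BorelSpace E]
  [NormedAddCommGroup F] [InnerProductSpace ℝ F] [FiniteDimensional ℝ F]
  [MeasurableSpace F] [BorelSpace F]

lemma lintegral_withLp_prod {f : WithLp 2 (E × F) → ℝ≥0∞} (hf : Measurable f) :
    ∫⁻ p, f p = ∫⁻ x : E, ∫⁻ y : F, f (WithLp.toLp 2 (x, y)) := by
  rw [← (WithLp.volume_preserving_toLp E F).lintegral_comp hf, Measure.volume_eq_prod,
    lintegral_prod _ (by fun_prop)]

lemma lintegral_comp_norm_eq_of_finrank_eq (h : finrank ℝ E = finrank ℝ F) {f : ℝ → ℝ≥0∞}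
    (hf : Measurable f) : ∫⁻ x : E, f ‖x‖ = ∫⁻ y : F, f ‖y‖ := by
  let e : E ≃ₗᵢ[ℝ] F := (stdOrthonormalBasis ℝ E).equiv (stdOrthonormalBasis ℝ F) (finCongr h)
  rw [← e.measurePreserving.lintegral_comp (by fun_prop)]
  simp only [e.norm_map]

end InnerProductSpace

lemma finrank_withLp_two_prod (E F : Type*) [AddCommGroup E] [Module ℝ E] [Module.Finite ℝ E]
    [AddCommGroup F] [Module ℝ F] [Module.Finite ℝ F] :
    finrank ℝ (WithLp 2 (E × F)) = finrank ℝ E + finrank ℝ F := by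
  rw [(WithLp.linearEquiv 2 ℝ _).finrank_eq, finrank_prod]

lemma lintegral_sqrt_add_norm_sq_eq_iterate_lmontee (j : ℕ) {g : ℝ → ℝ≥0∞} (hg : Measurable g)
    {a : ℝ} (ha : 0 ≤ a) :
    ∫⁻ v : EuclideanSpace ℝ (Fin (2 * j)), g √(a ^ 2 + ‖v‖ ^ 2) =
      ENNReal.ofReal (2 * π) ^ j * lmontee^[j] g a := by
  induction j generalizing a with
  | zero =>
    have : IsEmpty (Fin (2 * 0)) := Fin.isEmpty
    simp [volume_euclideanSpace_eq_dirac, Real.sqrt_sq ha]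
  | succ j ih =>
    have finrank_eq : finrank ℝ (EuclideanSpace ℝ (Fin (2 * (j + 1)))) =
        finrank ℝ (WithLp 2 (ℂ × EuclideanSpace ℝ (Fin (2 * j)))) := by
      rw [finrank_withLp_two_prod, finrank_euclideanSpace_fin, finrank_euclideanSpace_fin,
        Complex.finrank_real_complex, mul_add_one, add_comm]
    have hgj := measurable_iterate_lmontee hg j
    calc ∫⁻ v : EuclideanSpace ℝ (Fin (2 * (j + 1))), g √(a ^ 2 + ‖v‖ ^ 2)
        = ∫⁻ p : WithLp 2 (ℂ × EuclideanSpace ℝ (Fin (2 * j))), g √(a ^ 2 + ‖p‖ ^ 2) :=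
          lintegral_comp_norm_eq_of_finrank_eq (f := fun r => g √(a ^ 2 + r ^ 2)) finrank_eq
            (by fun_prop)
      _ = ∫⁻ z : ℂ, ∫⁻ v : EuclideanSpace ℝ (Fin (2 * j)),
            g √(√(a ^ 2 + ‖z‖ ^ 2) ^ 2 + ‖v‖ ^ 2) := by
          rw [lintegral_withLp_prod (by fun_prop)]
          simp only [WithLp.prod_norm_sq_eq_of_L2, WithLp.toLp_fst, WithLp.toLp_snd, ← add_assoc,
            Real.sq_sqrt (add_nonneg (sq_nonneg a) (sq_nonneg _))]
      _ = ∫⁻ z : ℂ, ENNReal.ofReal (2 * π) ^ j * lmontee^[j] g √(a ^ 2 + ‖z‖ ^ 2) := by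
          simp only [ih (Real.sqrt_nonneg _)]
      _ = ENNReal.ofReal (2 * π) ^ (j + 1) * lmontee^[j + 1] g a := by
          rw [lintegral_const_mul _ (by fun_prop), lintegral_complex_sqrt_add_norm_sq hgj ha,
            Function.iterate_succ_apply', pow_succ, mul_assoc]

lemma max_norm_add_norm_sub_toLp {V : Type*} [SeminormedAddCommGroup V] (t : ℝ) {d : ℝ}
    (hd : 0 ≤ d) (v : V) :
    max ‖WithLp.toLp 2 (t, v) + WithLp.toLp 2 (d, 0)‖
        ‖WithLp.toLp 2 (t, v) - WithLp.toLp 2 (d, 0)‖ = √((|t| + d) ^ 2 + ‖v‖ ^ 2) := by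
  have max_sq : max ((t + d) ^ 2) ((t - d) ^ 2) = (|t| + d) ^ 2 := by
    rcases le_total 0 t with h | h
    · rw [abs_of_nonneg h, max_eq_left (by nlinarith)]
    · rw [abs_of_nonpos h, max_eq_right (by nlinarith)]
      ring
  simp only [← WithLp.toLp_add, ← WithLp.toLp_sub, Prod.mk_add_mk, Prod.mk_sub_mk, add_zero,
    sub_zero, WithLp.prod_norm_eq_of_L2, WithLp.toLp_fst, WithLp.toLp_snd, Real.norm_eq_abs, sq_abs]
  rw [← (Monotone.map_max fun _ _ h => Real.sqrt_le_sqrt h), max_add_add_right, max_sq]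

lemma exists_linearIsometryEquiv_apply_eq {E F : Type*}
    [NormedAddCommGroup E] [InnerProductSpace ℝ E] [FiniteDimensional ℝ E]
    [NormedAddCommGroup F] [InnerProductSpace ℝ F] [FiniteDimensional ℝ F]
    (h : finrank ℝ E = finrank ℝ F) {x : E} {y : F} (hxy : ‖x‖ = ‖y‖) :
    ∃ e : E ≃ₗᵢ[ℝ] F, e x = y := by
  let e : E ≃ₗᵢ[ℝ] F := (stdOrthonormalBasis ℝ E).equiv (stdOrthonormalBasis ℝ F) (finCongr h)
  exact ⟨e.trans (Submodule.reflection (ℝ ∙ (e x - y))ᗮ),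
    Submodule.reflection_sub (by rw [e.norm_map, hxy])⟩

lemma lintegral_min_comp_norm_sub {E V : Type*}
    [NormedAddCommGroup E] [InnerProductSpace ℝ E] [FiniteDimensional ℝ E]
    [MeasurableSpace E] [BorelSpace E]
    [NormedAddCommGroup V] [InnerProductSpace ℝ V] [FiniteDimensional ℝ V]
    [MeasurableSpace V] [BorelSpace V]
    (hEV : finrank ℝ E = finrank ℝ V + 1) {W : ℝ → ℝ≥0∞} (hW : Antitone W) (a b : E) :
    ∫⁻ z : E, min (W ‖z - a‖) (W ‖z - b‖) =
      ∫⁻ t : ℝ, ∫⁻ v : V, W √((|t| + ‖a - b‖ / 2) ^ 2 + ‖v‖ ^ 2) := by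
  have hWm : Measurable W := hW.measurable
  let c : E := midpoint ℝ a b - a
  let q : WithLp 2 (ℝ × V) := WithLp.toLp 2 (‖a - b‖ / 2, 0)
  have norm_c : ‖c‖ = ‖q‖ := by
    simp only [c, q, midpoint_sub_left, invOf_eq_inv, norm_smul, norm_inv, norm_ofNat,
      norm_sub_rev b a, WithLp.norm_toLp_fst, norm_div, norm_norm]
    ring
  obtain ⟨e, he⟩ := exists_linearIsometryEquiv_apply_eq
    (by rw [hEV, finrank_withLp_two_prod, finrank_self, add_comm]) norm_c
  have sub_left (z : E) : z + midpoint ℝ a b - a = z + c := add_sub_assoc _ _ _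
  have sub_right (z : E) : z + midpoint ℝ a b - b = z - c := by
    rw [add_sub_assoc, midpoint_sub_right, ← neg_sub b a, smul_neg, ← midpoint_sub_left,
      ← sub_eq_add_neg]
  calc ∫⁻ z : E, min (W ‖z - a‖) (W ‖z - b‖)
      = ∫⁻ z : E, W (max ‖z - a‖ ‖z - b‖) := by simp only [hW.map_max]
    _ = ∫⁻ z : E, W (max ‖z + c‖ ‖z - c‖) := by
        rw [← lintegral_add_right_eq_self _ (midpoint ℝ a b)]
        simp only [sub_left, sub_right]
    _ = ∫⁻ p : WithLp 2 (ℝ × V), W (max ‖p + q‖ ‖p - q‖) := by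
        rw [← e.measurePreserving.lintegral_comp (by fun_prop)]
        simp only [← he, ← map_add, ← map_sub, e.norm_map]
    _ = ∫⁻ t : ℝ, ∫⁻ v : V, W √((|t| + ‖a - b‖ / 2) ^ 2 + ‖v‖ ^ 2) := by
        rw [lintegral_withLp_prod (by fun_prop)]
        simp only [q, max_norm_add_norm_sub_toLp _ (by positivity : 0 ≤ ‖a - b‖ / 2)]

lemma lintegral_comp_abs (f : ℝ → ℝ≥0∞) :
    ∫⁻ t, f |t| = 2 * ∫⁻ t in Ioi 0, f t := by
  have on_Ioi : ∫⁻ t in Ioi 0, f |t| = ∫⁻ t in Ioi 0, f t :=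
    setLIntegral_congr_fun measurableSet_Ioi fun t ht => by rw [abs_of_pos ht]
  have on_Iio : ∫⁻ t in Iio 0, f |t| = ∫⁻ t in Ioi 0, f |t| := by
    simpa using (Measure.measurePreserving_neg (volume : Measure ℝ)).setLIntegral_comp_preimage_emb
      (Homeomorph.neg ℝ).measurableEmbedding (fun t => f |t|) (Ioi 0)
  rw [← lintegral_add_compl _ measurableSet_Ioi (A := Ioi (0 : ℝ)), compl_Ioi,
    setLIntegral_congr Iio_ae_eq_Iic.symm, on_Iio, on_Ioi, two_mul]

lemma lintegral_powerProfile_abs_add (m : ℕ) {r : ℝ} (hr : 0 ≤ r) :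
    ∫⁻ t : ℝ, powerProfile m 0 (|t| + r / 2) = ENNReal.ofReal (1 - r) ^ (m + 1) / (m + 1) := by
  rw [lintegral_comp_abs (fun t => powerProfile m 0 (t + r / 2)),
    setLIntegral_Ioi_eq_Ioo (c := (1 - r) / 2)
      fun t ht => powerProfile_eq_zero _ _ (by linarith)]
  rcases le_or_gt 1 r with hr1 | hr1
  · rw [Ioo_eq_empty (by linarith), setLIntegral_empty, ENNReal.ofReal_of_nonpos (by linarith)]
    simp
  have hasDerivAt_primitive (t : ℝ) : HasDerivAt
      (fun t => -(1 - 2 * (t + r / 2)) ^ (m + 1) / (2 * (m + 1)))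
      ((1 - 2 * (t + r / 2)) ^ m) t := by
    convert! ((((((hasDerivAt_id t).add_const (r / 2)).const_mul 2).const_sub 1).pow
      (m + 1)).neg.div_const (2 * (m + 1))) using 1
    simp only [Nat.cast_add, Nat.cast_one, id_eq, add_tsub_cancel_right, mul_one, mul_neg, neg_neg]
    field_simp
  have integrand_eq : EqOn (fun t => powerProfile m 0 (t + r / 2))
      (fun t => ENNReal.ofReal ((1 - 2 * (t + r / 2)) ^ m)) (Ioo 0 ((1 - r) / 2)) :=
    fun t ⟨ht0, ht⟩ => by
      simp only
      rw [powerProfile_eq_ofReal _ _ (by linarith) (by linarith)]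
      simp
  rw [setLIntegral_congr_fun measurableSet_Ioo integrand_eq,
    setLIntegral_Ioo_ofReal_of_hasDerivAt (by linarith)
      (fun t _ => (hasDerivAt_primitive t).continuousAt.continuousWithinAt)
      (fun t _ => hasDerivAt_primitive t) (fun t ht => pow_nonneg (by linarith [ht.2]) _),
      ← ENNReal.ofReal_pow (by linarith), ← ofReal_natCast_add_one,
      ← ENNReal.ofReal_div_of_pos (by positivity), ← ENNReal.ofReal_ofNat 2,
      ← ENNReal.ofReal_mul zero_le_two]
  congr 1
  field_simp
  ring

lemma lintegral_min_monteePreimage {E : Type*}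
    [NormedAddCommGroup E] [InnerProductSpace ℝ E] [FiniteDimensional ℝ E]
    [MeasurableSpace E] [BorelSpace E] {m : ℕ} (hE : finrank ℝ E = 2 * m + 1) (a b : E) :
    ∫⁻ z : E, min (monteePreimage m 0 0 ‖z - a‖) (monteePreimage m 0 0 ‖z - b‖) =
      ENNReal.ofReal (2 * π) ^ m / (m + 1) * ENNReal.ofReal (1 - ‖a - b‖) ^ (m + 1) := by
  have hW := antitone_monteePreimage m 0 0
  rw [lintegral_min_comp_norm_sub (V := EuclideanSpace ℝ (Fin (2 * m)))
    (by rw [hE, finrank_euclideanSpace_fin]) hW]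
  calc ∫⁻ t : ℝ, ∫⁻ v : EuclideanSpace ℝ (Fin (2 * m)),
        monteePreimage m 0 0 √((|t| + ‖a - b‖ / 2) ^ 2 + ‖v‖ ^ 2)
      = ∫⁻ t : ℝ, ENNReal.ofReal (2 * π) ^ m *
          lmontee^[m] (monteePreimage m 0 0) (|t| + ‖a - b‖ / 2) := by
        refine lintegral_congr fun t => ?_
        exact lintegral_sqrt_add_norm_sq_eq_iterate_lmontee m hW.measurable (by positivity)
    _ = ∫⁻ t : ℝ, ENNReal.ofReal (2 * π) ^ m * powerProfile m 0 (|t| + ‖a - b‖ / 2) := by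
        refine lintegral_congr_ae ?_
        filter_upwards [Measure.ae_ne volume 0] with t ht
        rw [iterate_lmontee_monteePreimage m 0 0
          (add_pos_of_pos_of_nonneg (abs_pos.2 ht) (by positivity)), add_zero]
    _ = ENNReal.ofReal (2 * π) ^ m / (m + 1) * ENNReal.ofReal (1 - ‖a - b‖) ^ (m + 1) := by
        have := (antitone_powerProfile m 0).measurable
        rw [lintegral_const_mul _ (by fun_prop), lintegral_powerProfile_abs_add m (norm_nonneg _),
          div_eq_mul_inv, div_eq_mul_inv, mul_right_comm, mul_assoc]

/-- The indicator, as a function of `r`, of the superlevel set `{r | t < W r}`. The level is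
real because the layer-cake formula integrates it over `(0, ∞)`. -/
noncomputable def levelIndicator (W : ℝ → ℝ≥0∞) (t : ℝ) : ℝ → ℝ≥0∞ :=
  {r | ENNReal.ofReal t < W r}.indicator 1

lemma measurable_levelIndicator {W : ℝ → ℝ≥0∞} (hW : Measurable W) :
    Measurable fun q : ℝ × ℝ => levelIndicator W q.1 q.2 :=
  measurable_one.indicator (measurableSet_lt (f := fun q : ℝ × ℝ => ENNReal.ofReal q.1)
    (g := fun q => W q.2) (by fun_prop) (by fun_prop))

lemma volume_setOf_pos_and_ofReal_lt (M : ℝ≥0∞) :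
    volume {t : ℝ | 0 < t ∧ ENNReal.ofReal t < M} = M := by
  rcases eq_or_ne M ∞ with rfl | hM
  · simp only [ENNReal.ofReal_lt_top, and_true]
    exact Real.volume_Ioi
  · have setOf_eq : {t : ℝ | 0 < t ∧ ENNReal.ofReal t < M} = Ioo 0 M.toReal := by
      ext t
      exact and_congr_right fun ht => ENNReal.ofReal_lt_iff_lt_toReal ht.le hM
    rw [setOf_eq, Real.volume_Ioo, sub_zero, ENNReal.ofReal_toReal hM]

lemma setLIntegral_Ioi_levelIndicator_mul (W : ℝ → ℝ≥0∞) (a b : ℝ) :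
    ∫⁻ t in Ioi 0, levelIndicator W t a * levelIndicator W t b = min (W a) (W b) := by
  have mul_eq (t : ℝ) : levelIndicator W t a * levelIndicator W t b =
      {t | ENNReal.ofReal t < min (W a) (W b)}.indicator 1 t := by
    by_cases ha : ENNReal.ofReal t < W a <;> by_cases hb : ENNReal.ofReal t < W b <;>
      simp [levelIndicator, ha, hb]
  simp only [mul_eq]
  rw [setLIntegral_indicator (measurableSet_lt (by fun_prop) (by fun_prop))]
  simp only [Pi.one_apply, setLIntegral_one]
  rw [inter_comm]
  exact volume_setOf_pos_and_ofReal_lt _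

lemma lintegral_lintegral_prod_mul_sub {Ω V : Type*} [MeasurableSpace Ω] [AddGroup V]
    [MeasurableSpace V] [MeasurableAdd₂ V] [MeasurableNeg V] {μ : Measure Ω} [SFinite μ]
    {ν : Measure V} [SFinite ν] [ν.IsAddLeftInvariant] [ν.IsNegInvariant]
    {f g : Ω × V → ℝ≥0∞} (hf : Measurable f) (hg : Measurable g) :
    ∫⁻ v, ∫⁻ z, f z * g (z.1, z.2 - v) ∂(μ.prod ν) ∂ν =
      ∫⁻ ω, (∫⁻ w, f (ω, w) ∂ν) * ∫⁻ w, g (ω, w) ∂ν ∂μ := by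
  calc ∫⁻ v, ∫⁻ z, f z * g (z.1, z.2 - v) ∂(μ.prod ν) ∂ν
      = ∫⁻ z, ∫⁻ v, f z * g (z.1, z.2 - v) ∂ν ∂(μ.prod ν) :=
        lintegral_lintegral_swap (by fun_prop)
    _ = ∫⁻ z, f z * ∫⁻ w, g (z.1, w) ∂ν ∂(μ.prod ν) := by
        refine lintegral_congr fun z => ?_
        rw [lintegral_const_mul _ (by fun_prop),
          lintegral_sub_left_eq_self (fun w => g (z.1, w)) z.2]
    _ = ∫⁻ ω, (∫⁻ w, f (ω, w) ∂ν) * ∫⁻ w, g (ω, w) ∂ν ∂μ := by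
        have : Measurable fun ω => ∫⁻ w, g (ω, w) ∂ν := hg.lintegral_prod_right'
        rw [lintegral_prod _ (by fun_prop)]
        refine lintegral_congr fun ω => ?_
        exact lintegral_mul_const (∫⁻ w, g (ω, w) ∂ν)
          (by fun_prop : Measurable fun w => f (ω, w))

section Slice

variable {F V : Type*}
  [NormedAddCommGroup F] [InnerProductSpace ℝ F] [FiniteDimensional ℝ F]
  [MeasurableSpace F] [BorelSpace F]
  [NormedAddCommGroup V] [InnerProductSpace ℝ V] [FiniteDimensional ℝ V]
  [MeasurableSpace V] [BorelSpace V]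

variable (V) in
/-- The volume of the slice `{w | t < W ‖(u, w)‖}` over `u : F` of a superlevel set of the radial
function `W ‖·‖` on `F × V`. -/
noncomputable def sliceVolume (W : ℝ → ℝ≥0∞) (t : ℝ) (u : F) : ℝ≥0∞ :=
  ∫⁻ w : V, levelIndicator W t ‖WithLp.toLp 2 (u, w)‖

lemma lintegral_sliceVolume_mul {W : ℝ → ℝ≥0∞} (hW : Measurable W) (x y : F) :
    ∫⁻ ω, sliceVolume V W ω.1 (ω.2 - x) * sliceVolume V W ω.1 (ω.2 - y)
        ∂((volume.restrict (Ioi 0)).prod volume) =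
      ∫⁻ v : V, ∫⁻ p : WithLp 2 (F × V),
        min (W ‖p - WithLp.toLp 2 (x, 0)‖) (W ‖p - WithLp.toLp 2 (y, v)‖) := by
  have hI := measurable_levelIndicator hW
  let f (x : F) (z : (ℝ × F) × V) : ℝ≥0∞ :=
    levelIndicator W z.1.1 ‖(WithLp.toLp 2 (z.1.2 - x, z.2) : WithLp 2 (F × V))‖
  have hf (x : F) : Measurable (f x) :=
    hI.comp (f := fun z : (ℝ × F) × V =>
      (z.1.1, ‖(WithLp.toLp 2 (z.1.2 - x, z.2) : WithLp 2 (F × V))‖)) (by fun_prop)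
  symm
  calc ∫⁻ v : V, ∫⁻ p : WithLp 2 (F × V),
        min (W ‖p - WithLp.toLp 2 (x, 0)‖) (W ‖p - WithLp.toLp 2 (y, v)‖)
      = ∫⁻ v : V, ∫⁻ u : F, ∫⁻ w : V, ∫⁻ t in Ioi 0, f x ((t, u), w) * f y ((t, u), w - v) := by
        refine lintegral_congr fun v => ?_
        rw [lintegral_withLp_prod (by fun_prop)]
        simp only [f, setLIntegral_Ioi_levelIndicator_mul, ← WithLp.toLp_sub, Prod.mk_sub_mk,
          sub_zero]
    _ = ∫⁻ v : V, ∫⁻ u : F, ∫⁻ t in Ioi 0, ∫⁻ w : V, f x ((t, u), w) * f y ((t, u), w - v) := by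
        refine lintegral_congr fun v => lintegral_congr fun u => ?_
        exact lintegral_lintegral_swap (by fun_prop)
    _ = ∫⁻ v : V, ∫⁻ z, f x z * f y (z.1, z.2 - v)
          ∂(((volume.restrict (Ioi 0)).prod volume).prod volume) := by
        refine lintegral_congr fun v => ?_
        have hm : Measurable fun z => f x z * f y (z.1, z.2 - v) := by fun_prop
        rw [lintegral_prod _ hm.aemeasurable, lintegral_prod_symm _
          hm.lintegral_prod_right'.aemeasurable]
    _ = ∫⁻ ω, sliceVolume V W ω.1 (ω.2 - x) * sliceVolume V W ω.1 (ω.2 - y)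
          ∂((volume.restrict (Ioi 0)).prod volume) :=
        lintegral_lintegral_prod_mul_sub (hf x) (hf y)

lemma lintegral_sliceVolume_monteePreimage_mul {s : ℕ} (hF : finrank ℝ F = 2 * (s / 2) + 1)
    (k : ℕ) (x y : F) :
    ∫⁻ ω, sliceVolume (EuclideanSpace ℝ (Fin (2 * k))) (monteePreimage (s / 2 + k) 0 0)
          ω.1 (ω.2 - x) *
        sliceVolume (EuclideanSpace ℝ (Fin (2 * k))) (monteePreimage (s / 2 + k) 0 0)
          ω.1 (ω.2 - y) ∂((volume.restrict (Ioi 0)).prod volume) =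
      ENNReal.ofReal (2 * π) ^ (s / 2 + k) / ((s / 2 + k : ℕ) + 1) *
        ENNReal.ofReal (2 * π) ^ k * lwendland s k ‖x - y‖ := by
  have finrank_eq : finrank ℝ (WithLp 2 (F × EuclideanSpace ℝ (Fin (2 * k)))) =
      2 * (s / 2 + k) + 1 := by
    rw [finrank_withLp_two_prod, hF, finrank_euclideanSpace_fin, mul_add, add_right_comm]
  have norm_sub (v : EuclideanSpace ℝ (Fin (2 * k))) :
      ‖(WithLp.toLp 2 (x, 0) - WithLp.toLp 2 (y, v) : WithLp 2 (F × _))‖ =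
        √(‖x - y‖ ^ 2 + ‖v‖ ^ 2) := by
    rw [← WithLp.toLp_sub, WithLp.prod_norm_eq_of_L2]
    simp
  rw [lintegral_sliceVolume_mul (antitone_monteePreimage _ 0 0).measurable]
  simp only [lintegral_min_monteePreimage finrank_eq, norm_sub]
  rw [lintegral_const_mul _ (by fun_prop), lintegral_sqrt_add_norm_sq_eq_iterate_lmontee k
    (g := fun r => ENNReal.ofReal (1 - r) ^ (s / 2 + k + 1)) (by fun_prop) (norm_nonneg _),
    mul_assoc, lwendland]

end Slice

lemma sum_mul_mul_toReal_lintegral_mul_pos {Ω ι : Type*} [MeasurableSpace Ω] {μ : Measure Ω}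
    [Fintype ι] {g : ι → Ω → ℝ≥0∞} (hg : ∀ i, Measurable (g i))
    (hfin : ∀ i j, ∫⁻ ω, g i ω * g j ω ∂μ ≠ ∞) {c : ι → ℝ}
    (hc : ¬ ∀ᵐ ω ∂μ, ∑ i, c i * (g i ω).toReal = 0) :
    0 < ∑ i, ∑ j, c i * c j * (∫⁻ ω, g i ω * g j ω ∂μ).toReal := by
  have hm (i j : ι) : AEMeasurable (fun ω => g i ω * g j ω) μ := ((hg i).mul (hg j)).aemeasurable
  have integrable (i j : ι) : Integrable (fun ω => c i * c j * (g i ω * g j ω).toReal) μ :=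
    (integrable_toReal_of_lintegral_ne_top (hm i j) (hfin i j)).const_mul _
  have sq_sum_eq (ω : Ω) : (∑ i, c i * (g i ω).toReal) ^ 2 =
      ∑ i, ∑ j, c i * c j * (g i ω * g j ω).toReal := by
    simp only [sq, Finset.sum_mul_sum, ENNReal.toReal_mul, mul_mul_mul_comm]
  have integrable_sq : Integrable (fun ω => (∑ i, c i * (g i ω).toReal) ^ 2) μ := by
    simp only [sq_sum_eq]
    exact integrable_finsetSum _ fun i _ => integrable_finsetSum _ fun j _ => integrable i j
  have integral_sq : ∫ ω, (∑ i, c i * (g i ω).toReal) ^ 2 ∂μ =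
      ∑ i, ∑ j, c i * c j * (∫⁻ ω, g i ω * g j ω ∂μ).toReal := by
    simp only [sq_sum_eq]
    rw [integral_finsetSum _ fun i _ => integrable_finsetSum _ fun j _ => integrable i j]
    refine Finset.sum_congr rfl fun i _ => ?_
    rw [integral_finsetSum _ fun j _ => integrable i j]
    refine Finset.sum_congr rfl fun j _ => ?_
    rw [integral_const_mul, integral_toReal (hm i j) (ae_lt_top' (hm i j) (hfin i j))]
  rw [← integral_sq]
  refine (integral_nonneg fun ω => sq_nonneg _).lt_of_ne' fun h => hc ?_
  filter_upwards [(integral_eq_zero_iff_of_nonneg (fun ω => sq_nonneg _) integrable_sq).1 h]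
    with ω hω using pow_eq_zero_iff two_ne_zero |>.1 hω

lemma exists_radius_levelIndicator {W : ℝ → ℝ≥0∞} (hW : Antitone W) {t r₀ r₁ : ℝ}
    (h₀ : ENNReal.ofReal t < W r₀) (h₁ : W r₁ ≤ ENNReal.ofReal t) :
    ∃ R ≥ r₀, (∀ r < R, levelIndicator W t r = 1) ∧ ∀ r > R, levelIndicator W t r = 0 := by
  have bddAbove : BddAbove {r | ENNReal.ofReal t < W r} :=
    ⟨r₁, fun r hr => le_of_not_ge fun h => (hr.trans_le (hW h)).not_ge h₁⟩
  refine ⟨sSup {r | ENNReal.ofReal t < W r}, le_csSup bddAbove h₀, fun r hr => ?_, fun r hr => ?_⟩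
  · obtain ⟨r', hr', hlt⟩ := exists_lt_of_lt_csSup ⟨r₀, h₀⟩ hr
    exact indicator_of_mem (s := {r | ENNReal.ofReal t < W r}) (lt_of_lt_of_le hr' (hW hlt.le)) 1
  · exact indicator_of_notMem (notMem_of_csSup_lt hr bddAbove) 1

lemma mul_norm_lt_norm_add_smul_sub {E : Type*} [NormedAddCommGroup E] [InnerProductSpace ℝ E]
    {a b : E} (hba : ‖b‖ ≤ ‖a‖) (hne : b ≠ a) {d : ℝ} (hd : 0 < d) :
    d * ‖a‖ < ‖a + d • a - b‖ := by
  have inner_nonneg : 0 ≤ inner ℝ (a - b) a := by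
    rw [inner_sub_left, real_inner_self_eq_norm_sq]
    nlinarith [real_inner_le_norm b a, norm_nonneg a]
  have norm_pos : 0 < ‖a - b‖ := norm_pos_iff.2 (sub_ne_zero.2 hne.symm)
  refine lt_of_pow_lt_pow_left₀ 2 (norm_nonneg _) ?_
  calc (d * ‖a‖) ^ 2
      < ‖a - b‖ ^ 2 + 2 * (d * inner ℝ (a - b) a) + (d * ‖a‖) ^ 2 := by
        have := mul_nonneg hd.le inner_nonneg
        have := pow_pos norm_pos 2
        linarith
    _ = ‖a + d • a - b‖ ^ 2 := by
        rw [add_sub_right_comm, norm_add_sq_real, inner_smul_right, norm_smul,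
          Real.norm_of_nonneg hd.le]

open Filter Topology in
lemma exists_eventually_norm_sub_lt_and_lt {E ι : Type*} [NormedAddCommGroup E]
    [InnerProductSpace ℝ E] {x : ι → E} (hx : Function.Injective x) {S : Finset ι}
    (hS : S.Nonempty) {R : ℝ} (hR : 0 < R) :
    ∃ i ∈ S, ∃ u, ∀ᶠ v in 𝓝 u, ‖v - x i‖ < R ∧ ∀ j ∈ S, j ≠ i → R < ‖v - x j‖ := by
  obtain ⟨i, hi, norm_le⟩ := S.exists_max_image (fun i => ‖x i‖) hS
  suffices ∃ u, ‖u - x i‖ < R ∧ ∀ j ∈ S, j ≠ i → R < ‖u - x j‖ by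
    obtain ⟨u, hui, huj⟩ := this
    have continuousAt (j : ι) : ContinuousAt (fun v => ‖v - x j‖) u := by fun_prop
    refine ⟨i, hi, u, ((continuousAt i).eventually_lt_const hui).and ?_⟩
    refine (eventually_all_finset S).2 fun j hj => eventually_imp_distrib_left.2 fun hji => ?_
    exact (continuousAt j).eventually_const_lt (huj j hj hji)
  rcases eq_or_ne (x i) 0 with h0 | h0
  · refine ⟨x i, by simpa using hR, fun j hj hji => absurd (hx ?_) hji⟩
    rw [h0, ← norm_le_zero_iff]
    simpa [h0] using norm_le j hj
  have hnorm : 0 < ‖x i‖ := norm_pos_iff.2 h0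
  have hd : 0 < R / ‖x i‖ := by positivity
  have far : ∀ᶠ d in 𝓝[<] (R / ‖x i‖), ∀ j ∈ S, j ≠ i → R < ‖x i + d • x i - x j‖ := by
    refine nhdsWithin_le_nhds ((eventually_all_finset S).2 fun j hj =>
      eventually_imp_distrib_left.2 fun hji => ?_)
    have hlt := mul_norm_lt_norm_add_smul_sub (norm_le j hj) (hx.ne hji) hd
    rw [div_mul_cancel₀ R hnorm.ne'] at hlt
    exact (by fun_prop : Continuous fun d : ℝ => ‖x i + d • x i - x j‖).continuousAt
      |>.eventually_const_lt hlt
  obtain ⟨d, hfar, hd0, hdR⟩ := (far.and (Ioo_mem_nhdsLT hd)).exists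
  refine ⟨x i + d • x i, ?_, hfar⟩
  rwa [add_sub_cancel_left, norm_smul, Real.norm_of_nonneg hd0.le, ← lt_div_iff₀ hnorm]

section SliceSeparation

open Filter Topology

variable {F V : Type*} [NormedAddCommGroup F]
  [NormedAddCommGroup V] [InnerProductSpace ℝ V] [FiniteDimensional ℝ V]
  [MeasurableSpace V] [BorelSpace V]
  {W : ℝ → ℝ≥0∞} {t R : ℝ} {u : F}

lemma measurable_sliceVolume_sub [MeasurableSpace F] [BorelSpace F]
    (hW : Measurable W) (a : F) :
    Measurable fun ω : ℝ × F => sliceVolume V W ω.1 (ω.2 - a) := by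
  refine Measurable.lintegral_prod_right' (f := fun z : (ℝ × F) × V =>
    levelIndicator W z.1.1 ‖WithLp.toLp 2 (z.1.2 - a, z.2)‖) ?_
  exact (measurable_levelIndicator hW).comp (f := fun z : (ℝ × F) × V =>
    (z.1.1, ‖WithLp.toLp 2 (z.1.2 - a, z.2)‖)) (by fun_prop)

lemma sliceVolume_pos (h : ∀ r < R, levelIndicator W t r = 1) (hu : ‖u‖ < R) :
    0 < sliceVolume V W t u := by
  have isOpen : IsOpen {w : V | ‖WithLp.toLp 2 (u, w)‖ < R} :=
    isOpen_lt (by fun_prop) continuous_const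
  calc (0 : ℝ≥0∞)
      < volume {w : V | ‖WithLp.toLp 2 (u, w)‖ < R} :=
        isOpen.measure_pos volume ⟨0, by simpa using hu⟩
    _ = ∫⁻ w : V, {w : V | ‖WithLp.toLp 2 (u, w)‖ < R}.indicator 1 w :=
        (lintegral_indicator_one isOpen.measurableSet).symm
    _ ≤ sliceVolume V W t u :=
        lintegral_mono (indicator_le fun w hw => (h _ hw).ge)

lemma sliceVolume_eq_zero (h : ∀ r > R, levelIndicator W t r = 0) (hu : R < ‖u‖) :
    sliceVolume V W t u = 0 := by
  have levelIndicator_eq_zero (w : V) : levelIndicator W t ‖WithLp.toLp 2 (u, w)‖ = 0 :=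
    h _ (hu.trans_le (WithLp.norm_fst_le _ (WithLp.toLp 2 (u, w))))
  simp [sliceVolume, levelIndicator_eq_zero]

lemma sliceVolume_ne_top (h : ∀ r > R, levelIndicator W t r = 0) : sliceVolume V W t u ≠ ∞ := by
  have le_indicator (w : V) : levelIndicator W t ‖WithLp.toLp 2 (u, w)‖ ≤
      (Metric.closedBall (0 : V) R).indicator 1 w := by
    by_cases hw : ‖w‖ ≤ R
    · rw [indicator_of_mem (mem_closedBall_zero_iff.2 hw)]
      exact indicator_le_self' (by simp) _
    · rw [h _ ((not_le.1 hw).trans_le (WithLp.norm_snd_le _ (WithLp.toLp 2 (u, w))))]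
      exact zero_le
  refine ne_top_of_le_ne_top ?_ (lintegral_mono le_indicator)
  rw [lintegral_indicator_one Metric.isClosed_closedBall.measurableSet]
  exact measure_closedBall_lt_top.ne

variable [InnerProductSpace ℝ F] {ι : Type*} [Fintype ι] {x : ι → F} {c : ι → ℝ}

lemma exists_eventually_sum_sliceVolume_ne_zero (hR : 0 < R)
    (h₁ : ∀ r < R, levelIndicator W t r = 1) (h₀ : ∀ r > R, levelIndicator W t r = 0)
    (hx : Function.Injective x) (hc : c ≠ 0) :
    ∃ u, ∀ᶠ v in 𝓝 u, ∑ i, c i * (sliceVolume V W t (v - x i)).toReal ≠ 0 := by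
  classical
  obtain ⟨i₀, hi₀⟩ := Function.ne_iff.1 hc
  obtain ⟨i, hi, u, hu⟩ := exists_eventually_norm_sub_lt_and_lt hx
    (S := {i | c i ≠ 0}) ⟨i₀, by simpa using hi₀⟩ hR
  simp only [Finset.mem_filter, Finset.mem_univ, true_and] at hi hu
  refine ⟨u, hu.mono fun v ⟨hvi, hvj⟩ => ?_⟩
  rw [Finset.sum_eq_single_of_mem i (Finset.mem_univ i)]
  · exact mul_ne_zero hi
      (ENNReal.toReal_pos (sliceVolume_pos h₁ hvi).ne' (sliceVolume_ne_top h₀)).ne'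
  · intro j _ hji
    by_cases hj : c j = 0
    · simp [hj]
    · simp [sliceVolume_eq_zero h₀ (hvj j hj hji)]

variable [FiniteDimensional ℝ F] [MeasurableSpace F] [BorelSpace F]

lemma not_ae_sum_sliceVolume_eq_zero (hW : Antitone W) {r₀ r₁ : ℝ} (hr₀ : 0 < r₀)
    (hWr₀ : 0 < W r₀) (hWr₁ : W r₁ = 0) (hx : Function.Injective x) (hc : c ≠ 0) :
    ¬ ∀ᵐ ω ∂((volume.restrict (Ioi 0)).prod (volume : Measure F)),
      ∑ i, c i * (sliceVolume V W ω.1 (ω.2 - x i)).toReal = 0 := by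
  intro sum_eq_zero
  have sum_eq_zero_of_level := Measure.ae_ae_of_ae_prod sum_eq_zero
  have level_pos : volume.restrict (Ioi 0) {t : ℝ | ENNReal.ofReal t < W r₀} ≠ 0 := by
    rw [Measure.restrict_apply (measurableSet_lt (by fun_prop) (by fun_prop)), inter_comm]
    exact ((volume_setOf_pos_and_ofReal_lt (W r₀)).trans_ne hWr₀.ne')
  obtain ⟨t, ht, ae_eq_zero⟩ := Measure.exists_mem_of_measure_ne_zero_of_ae level_pos
    (ae_restrict_of_ae sum_eq_zero_of_level)
  obtain ⟨R, hR, h₁, h₀⟩ :=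
    exists_radius_levelIndicator hW (r₁ := r₁) ht (hWr₁.le.trans zero_le)
  obtain ⟨u, hu⟩ :=
    exists_eventually_sum_sliceVolume_ne_zero (V := V) (hr₀.trans_le hR) h₁ h₀ hx hc
  obtain ⟨v, hv, hv'⟩ := (hu.and_frequently (mem_closure_iff_frequently.1
    (Measure.dense_of_ae ae_eq_zero u))).exists
  exact hv hv'

end SliceSeparation

lemma isStrictlyPosDefOn_wendland_of_finrank_eq {F : Type*} [NormedAddCommGroup F]
    [InnerProductSpace ℝ F] [FiniteDimensional ℝ F] {s : ℕ} (hF : finrank ℝ F = 2 * (s / 2) + 1)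
    (k : ℕ) : IsStrictlyPosDefOn F (wendland s k) := by
  let _ : MeasurableSpace F := borel F
  have _ : BorelSpace F := ⟨rfl⟩
  intro N x hx c hc
  let W := monteePreimage (s / 2 + k) 0 0
  let V := EuclideanSpace ℝ (Fin (2 * k))
  have antitone : Antitone W := antitone_monteePreimage _ 0 0
  let C := ENNReal.ofReal (2 * π) ^ (s / 2 + k) / ((s / 2 + k : ℕ) + 1) *
    ENNReal.ofReal (2 * π) ^ k
  have C_ne_top : C ≠ ∞ := by finiteness
  have gram (i j : Fin N) :
      ∫⁻ ω, sliceVolume V W ω.1 (ω.2 - x i) * sliceVolume V W ω.1 (ω.2 - x j)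
        ∂((volume.restrict (Ioi 0)).prod volume) = C * lwendland s k ‖x i - x j‖ :=
    lintegral_sliceVolume_monteePreimage_mul hF k (x i) (x j)
  have quadratic_form_pos : 0 < ∑ i, ∑ j, c i * c j * (C * lwendland s k ‖x i - x j‖).toReal := by
    simp only [← gram]
    refine sum_mul_mul_toReal_lintegral_mul_pos
      (fun i => measurable_sliceVolume_sub antitone.measurable (x i)) (fun i j => ?_)
      (not_ae_sum_sliceVolume_eq_zero antitone (r₀ := 1 / 4) (r₁ := 1 / 2) (by norm_num)
        (monteePreimage_pos _ 0 0 (by norm_num)) (monteePreimage_eq_zero _ 0 0 le_rfl) hx hc)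
    rw [gram]
    exact ENNReal.mul_ne_top C_ne_top (lwendland_ne_top s k (norm_nonneg _))
  refine pos_of_mul_pos_right (a := C.toReal) ?_ ENNReal.toReal_nonneg
  calc 0 < ∑ i, ∑ j, c i * c j * (C * lwendland s k ‖x i - x j‖).toReal := quadratic_form_pos
    _ = C.toReal * ∑ i, ∑ j, c i * c j * wendland s k ‖x i - x j‖ := by
        simp only [Finset.mul_sum, ENNReal.toReal_mul, mul_left_comm C.toReal,
          wendland_eq_toReal_lwendland s k (norm_nonneg _)]

theorem wendland_strictly_positive_definite_general {E : Type*} [NormedAddCommGroup E]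
    [InnerProductSpace ℝ E] [FiniteDimensional ℝ E] {s : ℕ} (hE : finrank ℝ E ≤ 2 * (s / 2) + 1)
    (k : ℕ) : IsStrictlyPosDefOn E (wendland s k) := by
  let V := EuclideanSpace ℝ (Fin (2 * (s / 2) + 1 - finrank ℝ E))
  have finrank_eq : finrank ℝ (WithLp 2 (E × V)) = 2 * (s / 2) + 1 := by
    rw [finrank_withLp_two_prod, finrank_euclideanSpace_fin, Nat.add_sub_cancel' hE]
  refine (isStrictlyPosDefOn_wendland_of_finrank_eq finrank_eq k).of_isometry
    (f := fun v => WithLp.toLp 2 (v, 0)) ?_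
  exact Isometry.of_dist_eq fun v w => by simp [dist_eq_norm, ← WithLp.toLp_sub]

/-- For every integer `s ≥ 1` and every integer `k ≥ 0`, the Wendland function
`φ_{s,k}` is strictly positive definite and radial on `ℝ^s`: for every finite family
of pairwise distinct points `x₁, …, x_N` in `s`-dimensional Euclidean space and every
nonzero vector of coefficients `c₁, …, c_N`,
`∑ i ∑ j, c i * c j * φ_{s,k}(‖x i - x j‖) > 0`. -/
theorem wendland_strictly_positive_definite
    (s : ℕ) (hs : 1 ≤ s) (k : ℕ)
    (N : ℕ) (x : Fin N → EuclideanSpace ℝ (Fin s)) (hx : Function.Injective x)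
    (c : Fin N → ℝ) (hc : c ≠ 0) :
    0 < ∑ i : Fin N, ∑ j : Fin N, c i * c j * wendland s k ‖x i - x j‖ :=
  wendland_strictly_positive_definite_general
    (by rw [finrank_euclideanSpace_fin]; omega) k N x hx c hc
end
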